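/- Let 1 ≤ p, q, r, s ≤ ∞ satisfy 1/p ≥ |1/r − 1/2| + 1/q' and q ≤ min{r, r', s, s'}. Then there exists a constant C > 0 such that for every Schwartz function a on ℝ^{2d} and every Schwartz function f on ℝ^d one has ‖a(x,D)f‖_{W(L^r,L^s)} ≤ C · ‖a‖_{M^{p,q}} · ‖f‖_{W(L^r,L^s)}. -/

import Mathlib

open MeasureTheory SchwartzMap Complex ENNReal NNReal

noncomputable section

/-- Mixed `L^p`-type norm of an `ℝ≥0∞`-valued function, with the usual
`essSup` modification when `p = ∞`. -/
def lqNorm {α : Type*} [MeasurableSpace α] (μ : Measure α) (p : ℝ≥0∞)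
    (f : α → ℝ≥0∞) : ℝ≥0∞ :=
  if p = ∞ then essSup f μ else (∫⁻ a, f a ^ p.toReal ∂μ) ^ (1 / p.toReal)

/-- Conjugate exponent in `ℝ≥0∞` : `1/p + 1/p' = 1`, with `1' = ∞`, `∞' = 1`. -/
def dualExp (p : ℝ≥0∞) : ℝ≥0∞ :=
  if p = 1 then ∞ else if p = ∞ then 1 else ENNReal.ofReal (p.toReal / (p.toReal - 1))

/-- `1/p` as a real number, with the convention `1/∞ = 0`. -/
def invR (p : ℝ≥0∞) : ℝ := (p⁻¹).toReal

/-- The Gaussian window `G(t) = exp(-π |t|²)` (as a complex-valued function). -/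
def gaussWin {ι : Type*} [Fintype ι] (t : EuclideanSpace ℝ ι) : ℂ :=
  Complex.exp (-(Real.pi * ‖t‖ ^ 2))

/-- Short-time Fourier transform with Gaussian window:
`V_G F (x, ω) = ∫ F t * conj (G (t - x)) * exp (-2πi ω⬝t) dt`. -/
def STFT {ι : Type*} [Fintype ι] (F : EuclideanSpace ℝ ι → ℂ)
    (x ω : EuclideanSpace ℝ ι) : ℂ :=
  ∫ t, F t * (starRingEnd ℂ) (gaussWin (t - x)) *
    Complex.exp (Complex.I * (-(2 * Real.pi * (inner ℝ ω t : ℝ))))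

/-- Modulation space norm `M^{p,q}`. -/
def modNorm {ι : Type*} [Fintype ι] (p q : ℝ≥0∞)
    (F : EuclideanSpace ℝ ι → ℂ) : ℝ≥0∞ :=
  lqNorm volume q fun ω => lqNorm volume p fun x => (‖STFT F x ω‖₊ : ℝ≥0∞)

/-- Wiener amalgam norm `W(𝓕 L^p, L^q)` (local component Fourier–Lebesgue). -/
def wFLNorm {ι : Type*} [Fintype ι] (p q : ℝ≥0∞)
    (F : EuclideanSpace ℝ ι → ℂ) : ℝ≥0∞ :=
  lqNorm volume q fun x => lqNorm volume p fun ω => (‖STFT F x ω‖₊ : ℝ≥0∞)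

/-- The unit cube `[0,1)^d`. -/
def unitCube (d : ℕ) : Set (EuclideanSpace ℝ (Fin d)) :=
  {x | ∀ i, x i ∈ Set.Ico (0 : ℝ) 1}

/-- Wiener amalgam norm
`‖f‖_{W(L^r,L^s)} = ( Σ_{n ∈ ℤ^d} ( ∫_{[0,1)^d} |f(x+n)|^r dx )^{s/r} )^{1/s}`. -/
def wNorm (d : ℕ) (r s : ℝ≥0∞) (f : EuclideanSpace ℝ (Fin d) → ℂ) : ℝ≥0∞ :=
  lqNorm (Measure.count : Measure (Fin d → ℤ)) s fun n =>
    lqNorm (volume.restrict (unitCube d)) r fun x =>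
      (‖f (x + show EuclideanSpace ℝ (Fin d) from WithLp.toLp 2 fun i => (n i : ℝ))‖₊ : ℝ≥0∞)

/-- Pairing `(x, ω) ∈ ℝ^d × ℝ^d ↦ ℝ^{2d}`. -/
def pairE {d : ℕ} (x ω : EuclideanSpace ℝ (Fin d)) :
    EuclideanSpace ℝ (Fin d ⊕ Fin d) :=
  WithLp.toLp 2 fun i => Sum.elim (fun j => x j) (fun j => ω j) i

/-- First (space) component of a point of `ℝ^{2d}`. -/
def xpart {d : ℕ} (z : EuclideanSpace ℝ (Fin d ⊕ Fin d)) :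
    EuclideanSpace ℝ (Fin d) := WithLp.toLp 2 fun i => z (Sum.inl i)

/-- Second (frequency) component of a point of `ℝ^{2d}`. -/
def wpart {d : ℕ} (z : EuclideanSpace ℝ (Fin d ⊕ Fin d)) :
    EuclideanSpace ℝ (Fin d) := WithLp.toLp 2 fun i => z (Sum.inr i)

/-- Fourier transform `f̂(ω) = ∫ f t e^{-2πi t⬝ω} dt`. -/
def fTrans {ι : Type*} [Fintype ι] (f : EuclideanSpace ℝ ι → ℂ)
    (ω : EuclideanSpace ℝ ι) : ℂ :=
  ∫ t, f t * Complex.exp (Complex.I * (-(2 * Real.pi * (inner ℝ t ω : ℝ))))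

/-- Kohn–Nirenberg operator `a(x,D) f (x) = ∫ a(x,ω) f̂(ω) e^{2πi x⬝ω} dω`. -/
def KNop {d : ℕ} (a : EuclideanSpace ℝ (Fin d ⊕ Fin d) → ℂ)
    (f : EuclideanSpace ℝ (Fin d) → ℂ) (x : EuclideanSpace ℝ (Fin d)) : ℂ :=
  ∫ ω, a (pairE x ω) * fTrans f ω *
    Complex.exp (Complex.I * (2 * Real.pi * (inner ℝ x ω : ℝ)))

/-- Weyl operator `L_σ f (x) = ∫∫ e^{2πi (x-y)⬝ω} σ((x+y)/2, ω) f(y) dy dω`. -/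
def weylOp {d : ℕ} (σ : EuclideanSpace ℝ (Fin d ⊕ Fin d) → ℂ)
    (f : EuclideanSpace ℝ (Fin d) → ℂ) (x : EuclideanSpace ℝ (Fin d)) : ℂ :=
  ∫ y, ∫ ω, Complex.exp (Complex.I * (2 * Real.pi * (inner ℝ (x - y) ω : ℝ))) *
    σ (pairE ((2 : ℝ)⁻¹ • (x + y)) ω) * f y

/-- Cross-Wigner distribution
`W(g,f)(x,ω) = ∫ g(x+t/2) conj(f(x−t/2)) e^{−2πi ω⬝t} dt`. -/
def wigner {d : ℕ} (g f : EuclideanSpace ℝ (Fin d) → ℂ)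
    (z : EuclideanSpace ℝ (Fin d ⊕ Fin d)) : ℂ :=
  ∫ t, g (xpart z + (2 : ℝ)⁻¹ • t) * (starRingEnd ℂ) (f (xpart z - (2 : ℝ)⁻¹ • t)) *
    Complex.exp (Complex.I * (-(2 * Real.pi * (inner ℝ (wpart z) t : ℝ))))

end

/-!
Multiply `a(x,D)f` by a Gaussian-type window centred at `x` and take the Fourier transform. The
Gabor inversion formula for the symbol bounds the result, in absolute value, by
`M(x, η) = ∫∫ |V_G a((x, ω), (η - ω, y))| |V_G f(x + y, ω)| dy dω`.
On unit cubes Hausdorff–Young controls the norm of `a(x,D)f` in `W(L^r, L^s)` by that of `M` in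
`L^e_x(L^τ_η)`, for `τ ≤ 2`, `r ≤ τ'` and `e ≤ s`; likewise it controls `V_G f` in `L^α_x(L^σ_ω)` by
`f` in `W(L^r, L^s)`, for `σ' ≤ min{2, r}` and `s ≤ α`. Between the two, test `M` against
a function in the dual space and apply Hölder's inequality, with `V_G a` in the norm of `M^{p,q}`.
The remaining factor is a convolution in `x` and in `ω` separately, and Young's inequality for
mixed norms bounds it as soon as `1/p' + 1/q' = 1/α + 1/e' = 1/σ + 1/τ'`. With
`1/σ = min{1 - 1/r, 1/2}` and `1/τ' = min{1/r, 1/2}` this is the equality case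
`1/p = |1/r - 1/2| + 1/q'`, from which smaller `p` follow by the embedding of modulation spaces.
-/

open Filter Set Topology

section ELpNorm

variable {α β : Type*} [MeasurableSpace α] [MeasurableSpace β] {μ : Measure α} {ν : Measure β}
  {p q : ℝ≥0∞}

theorem lqNorm_eq_eLpNorm (hp : p ≠ 0) (f : α → ℝ≥0∞) : lqNorm μ p f = eLpNorm f p μ := by
  unfold lqNorm
  split_ifs with h
  · simp only [h, eLpNorm_exponent_top, eLpNormEssSup, enorm_eq_self]
  · simp only [eLpNorm_eq_lintegral_rpow_enorm_toReal hp h, enorm_eq_self]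

theorem eLpNorm_ennreal_eq_lintegral (hp : p ≠ 0) (hp' : p ≠ ∞) (f : α → ℝ≥0∞) :
    eLpNorm f p μ = (∫⁻ x, f x ^ p.toReal ∂μ) ^ (1 / p.toReal) := by
  simp only [eLpNorm_eq_lintegral_rpow_enorm_toReal hp hp', enorm_eq_self]

theorem eLpNorm_top_ennreal_eq_essSup (f : α → ℝ≥0∞) : eLpNorm f ∞ μ = essSup f μ := by
  simp only [eLpNorm_exponent_top, eLpNormEssSup, enorm_eq_self]

theorem eLpNorm_one_ennreal_eq_lintegral (f : α → ℝ≥0∞) : eLpNorm f 1 μ = ∫⁻ x, f x ∂μ := by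
  simp only [eLpNorm_one_eq_lintegral_enorm, enorm_eq_self]

theorem eLpNorm_ennreal_mono {f g : α → ℝ≥0∞} (h : ∀ x, f x ≤ g x) :
    eLpNorm f p μ ≤ eLpNorm g p μ :=
  eLpNorm_mono_enorm fun x => by simpa only [enorm_eq_self] using h x

theorem eLpNorm_ennreal_const_mul {f : α → ℝ≥0∞} (hf : AEMeasurable f μ) (c : ℝ≥0∞) :
    eLpNorm (fun x => c * f x) p μ = c * eLpNorm f p μ := by
  rcases eq_or_ne p 0 with rfl | hp
  · simp only [eLpNorm_exponent_zero, mul_zero]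
  rcases eq_or_ne p ∞ with rfl | hp'
  · simp only [eLpNorm_top_ennreal_eq_essSup, ENNReal.essSup_const_mul]
  have hpos : 0 < p.toReal := toReal_pos hp hp'
  simp only [eLpNorm_ennreal_eq_lintegral hp hp', mul_rpow_of_nonneg _ _ hpos.le]
  rw [lintegral_const_mul'' _ (hf.pow_const _), mul_rpow_of_nonneg _ _ (by positivity),
    ← ENNReal.rpow_mul, mul_one_div_cancel hpos.ne', ENNReal.rpow_one]

theorem eLpNorm_ennreal_mul_const {f : α → ℝ≥0∞} (hf : AEMeasurable f μ) (c : ℝ≥0∞) :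
    eLpNorm (fun x => f x * c) p μ = eLpNorm f p μ * c := by
  simp only [mul_comm _ c, eLpNorm_ennreal_const_mul hf]

theorem eLpNorm_ennreal_rpow {c : ℝ} (hc : 0 < c) (f : α → ℝ≥0∞) :
    eLpNorm (fun x => f x ^ c) p μ = eLpNorm f (p * ENNReal.ofReal c) μ ^ c := by
  simpa only [enorm_eq_self] using eLpNorm_enorm_rpow f hc

theorem measurable_essSup_prodMk [SFinite ν] {f : α × β → ℝ≥0∞} (hf : Measurable f) :
    Measurable fun x => essSup (fun y => f (x, y)) ν := by
  refine measurable_of_Ioi fun c => ?_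
  have preimage_eq : (fun x => essSup (fun y => f (x, y)) ν) ⁻¹' Ioi c
      = {x | ν (Prod.mk x ⁻¹' {z | c < f z}) = 0}ᶜ := by
    ext x
    have essSup_le_iff : essSup (fun y => f (x, y)) ν ≤ c ↔ ∀ᵐ y ∂ν, f (x, y) ≤ c :=
      ⟨fun h => (ENNReal.ae_le_essSup _).mono fun y hy => hy.trans h, essSup_le_of_ae_le c⟩
    rw [mem_preimage, mem_Ioi, ← not_le, essSup_le_iff, ae_iff]
    simp only [not_le, mem_compl_iff, mem_ofPred_eq, preimage_ofPred_eq]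
  rw [preimage_eq]
  exact (measurable_measure_prodMk_left (measurableSet_lt measurable_const hf)
    (measurableSet_singleton 0)).compl

theorem measurable_eLpNorm_prodMk [SFinite ν] {f : α × β → ℝ≥0∞} (hf : Measurable f) :
    Measurable fun x => eLpNorm (fun y => f (x, y)) p ν := by
  rcases eq_or_ne p 0 with rfl | hp
  · simp only [eLpNorm_exponent_zero, measurable_const]
  rcases eq_or_ne p ∞ with rfl | hp'
  · simpa only [eLpNorm_top_ennreal_eq_essSup] using measurable_essSup_prodMk hf
  simp only [eLpNorm_ennreal_eq_lintegral hp hp']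
  exact (hf.pow_const _).lintegral_prod_right'.pow_const _

theorem lintegral_mul_le_eLpNorm_mul_eLpNorm [p.HolderConjugate q] {f g : α → ℝ≥0∞}
    (hf : AEMeasurable f μ) (hg : AEMeasurable g μ) :
    ∫⁻ x, f x * g x ∂μ ≤ eLpNorm f p μ * eLpNorm g q μ := by
  have lintegral_mul_le_top_mul_one : ∀ {f g : α → ℝ≥0∞}, AEMeasurable g μ →
      ∫⁻ x, f x * g x ∂μ ≤ eLpNorm f ∞ μ * eLpNorm g 1 μ := fun {f g} hg => by
    rw [eLpNorm_top_ennreal_eq_essSup, eLpNorm_one_ennreal_eq_lintegral,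
      ← lintegral_const_mul'' _ hg]
    exact lintegral_mono_ae ((ENNReal.ae_le_essSup f).mono fun x hx => by gcongr)
  rcases eq_or_ne p ∞ with rfl | hp
  · obtain rfl : q = 1 := (HolderConjugate.eq_top_iff_eq_one ∞ q).1 rfl
    exact lintegral_mul_le_top_mul_one hg
  rcases eq_or_ne q ∞ with rfl | hq
  · obtain rfl : p = 1 := (HolderConjugate.eq_top_iff_eq_one ∞ p).1 rfl
    simpa only [mul_comm] using lintegral_mul_le_top_mul_one (f := g) hf
  rw [eLpNorm_ennreal_eq_lintegral (HolderConjugate.ne_zero p q) hp,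
    eLpNorm_ennreal_eq_lintegral (HolderConjugate.ne_zero q p) hq]
  exact ENNReal.lintegral_mul_le_Lp_mul_Lq μ (HolderConjugate.toReal_of_ne_top hp hq) hf hg


theorem tendsto_eLpNorm_of_monotone (hp : p ≠ ∞) {f : ℕ → α → ℝ≥0∞} {g : α → ℝ≥0∞}
    (hf : ∀ n, Measurable (f n)) (hmono : ∀ x, Monotone fun n => f n x)
    (hlim : ∀ x, Tendsto (fun n => f n x) atTop (𝓝 (g x))) :
    Tendsto (fun n => eLpNorm (f n) p μ) atTop (𝓝 (eLpNorm g p μ)) := by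
  rcases eq_or_ne p 0 with rfl | hp₀
  · simp only [eLpNorm_exponent_zero, tendsto_const_nhds]
  simp only [eLpNorm_ennreal_eq_lintegral hp₀ hp]
  refine (ENNReal.continuous_rpow_const.tendsto _).comp ?_
  refine lintegral_tendsto_of_tendsto_of_monotone (fun n => ((hf n).pow_const _).aemeasurable)
    (ae_of_all _ fun x m n hmn => rpow_le_rpow (hmono x hmn) toReal_nonneg)
    (ae_of_all _ fun x => (ENNReal.continuous_rpow_const.tendsto _).comp (hlim x))

theorem eLpNorm_rpow_sub_one_div_le_one [p.HolderConjugate q] (hp : p ≠ ∞) {f : α → ℝ≥0∞}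
    (hf : AEMeasurable f μ) :
    eLpNorm (fun x => f x ^ (p.toReal - 1) / eLpNorm f p μ ^ (p.toReal - 1)) q μ ≤ 1 := by
  simp only [div_eq_mul_inv]
  rw [eLpNorm_ennreal_mul_const (hf.pow_const _)]
  rcases eq_or_ne q ∞ with rfl | hq
  · obtain rfl : p = 1 := (HolderConjugate.eq_top_iff_eq_one ∞ p).1 rfl
    simpa using eLpNormEssSup_le_of_ae_enorm_bound (μ := μ) (f := fun _ : α => (1 : ℝ≥0∞)) (C := 1)
      (by simp)
  have hpq := HolderConjugate.toReal_of_ne_top hp hq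
  rw [eLpNorm_ennreal_rpow hpq.sub_one_pos, ← ofReal_toReal hq,
    ← ofReal_mul toReal_nonneg, mul_comm q.toReal, hpq.sub_one_mul_conj, ofReal_toReal hp]
  exact ENNReal.mul_inv_le_one _

theorem eLpNorm_le_lintegral_mul_rpow_sub_one_div (hp₁ : 1 ≤ p) (hp : p ≠ ∞) {f : α → ℝ≥0∞}
    (hf : AEMeasurable f μ) (hfin : eLpNorm f p μ ≠ ∞) :
    eLpNorm f p μ ≤ ∫⁻ x, f x * (f x ^ (p.toReal - 1) / eLpNorm f p μ ^ (p.toReal - 1)) ∂μ := by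
  rcases eq_or_ne (eLpNorm f p μ) 0 with hzero | hzero
  · simp only [hzero, zero_le]
  have hp₁' : 1 ≤ p.toReal := by simpa using toReal_mono hp hp₁
  have hpow : ∀ x, f x * (f x ^ (p.toReal - 1) / eLpNorm f p μ ^ (p.toReal - 1))
      = f x ^ p.toReal * (eLpNorm f p μ ^ (p.toReal - 1))⁻¹ := fun x => by
    rw [div_eq_mul_inv, ← mul_assoc]
    congr 1
    nth_rewrite 1 [← ENNReal.rpow_one (f x)]
    rw [← ENNReal.rpow_add_of_nonneg _ _ zero_le_one (sub_nonneg.2 hp₁'), add_sub_cancel]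
  have lintegral_eq : ∫⁻ x, f x ^ p.toReal ∂μ = eLpNorm f p μ ^ p.toReal := by
    rw [eLpNorm_ennreal_eq_lintegral (zero_lt_one.trans_le hp₁).ne' hp, ← ENNReal.rpow_mul,
      one_div_mul_cancel (by linarith), ENNReal.rpow_one]
  simp only [hpow]
  rw [lintegral_mul_const'' _ (hf.pow_const _), lintegral_eq, ← ENNReal.rpow_neg,
    ← ENNReal.rpow_add _ _ hzero hfin]
  simp

theorem exists_monotone_truncation_prodMk [SigmaFinite ν] {f : α × β → ℝ≥0∞} (hf : Measurable f)
    (p : ℝ≥0∞) :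
    ∃ t : ℕ → α × β → ℝ≥0∞, (∀ n, Measurable (t n)) ∧ (∀ n z, t n z ≤ f z) ∧
      (∀ z, Monotone fun n => t n z) ∧ (∀ z, Tendsto (fun n => t n z) atTop (𝓝 (f z))) ∧
      ∀ n x, eLpNorm (fun y => t n (x, y)) p ν ≠ ∞ := by
  let t : ℕ → α × β → ℝ≥0∞ := fun n =>
    (Prod.snd ⁻¹' spanningSets ν n).indicator fun z => min (f z) n
  have t_tendsto : ∀ z, Tendsto (fun n => t n z) atTop (𝓝 (f z)) := fun z => by
    have t_eventually_eq : ∀ᶠ n : ℕ in atTop, t n z = min (f z) n := by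
      filter_upwards [eventually_ge_atTop (spanningSetsIndex ν z.2)] with n hn
      have hz : z.2 ∈ spanningSets ν n :=
        monotone_spanningSets ν hn (mem_spanningSetsIndex ν z.2)
      simp only [t, indicator, mem_preimage, hz, if_true]
    rw [tendsto_congr' t_eventually_eq]
    simpa using tendsto_const_nhds.min ENNReal.tendsto_nat_nhds_top
  have t_le_const : ∀ n x y, t n (x, y) ≤ (spanningSets ν n).indicator (fun _ => (n : ℝ≥0∞)) y :=
    fun n x y => by
      by_cases hy : y ∈ spanningSets ν n <;> simp [t, hy]
  refine ⟨t, fun n => ?_, fun n z => ?_, fun z m n hmn => ?_, t_tendsto, fun n x => ?_⟩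
  · exact (hf.min measurable_const).indicator (measurable_snd (measurableSet_spanningSets ν n))
  · exact indicator_le' (fun _ _ => min_le_left _ _) (fun _ _ => zero_le) z
  · exact (indicator_le_indicator_of_subset (preimage_mono (monotone_spanningSets ν hmn))
      (fun _ => zero_le) z).trans (indicator_le_indicator (by gcongr))
  · refine ((eLpNorm_ennreal_mono (t_le_const n x)).trans_lt ?_).ne
    refine (eLpNorm_indicator_const_le _ p).trans_lt (mul_lt_top ?_ ?_)
    · simp
    · exact rpow_lt_top_of_nonneg (by positivity) (measure_spanningSets_lt_top ν n).ne

theorem exists_eLpNorm_le_liminf_lintegral_mul [SigmaFinite ν] [p.HolderConjugate q] (hp : p ≠ ∞)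
    {f : α × β → ℝ≥0∞} (hf : Measurable f) :
    ∃ k : ℕ → α × β → ℝ≥0∞, (∀ n, Measurable (k n)) ∧
      (∀ n x, eLpNorm (fun y => k n (x, y)) q ν ≤ 1) ∧
      ∀ x, eLpNorm (fun y => f (x, y)) p ν ≤
        liminf (fun n => ∫⁻ y, f (x, y) * k n (x, y) ∂ν) atTop := by
  obtain ⟨t, t_meas, t_le, t_mono, t_lim, t_fin⟩ :=
    exists_monotone_truncation_prodMk (ν := ν) hf p
  have t_sec : ∀ n x, Measurable fun y => t n (x, y) := fun n x => by fun_prop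
  refine ⟨fun n z => t n z ^ (p.toReal - 1) /
    eLpNorm (fun y => t n (z.1, y)) p ν ^ (p.toReal - 1), fun n => ?_, fun n x => ?_, fun x => ?_⟩
  · exact ((t_meas n).pow_const _).div
      (((measurable_eLpNorm_prodMk (t_meas n)).comp measurable_fst).pow_const _)
  · exact eLpNorm_rpow_sub_one_div_le_one hp (t_sec n x).aemeasurable
  · rw [← (tendsto_eLpNorm_of_monotone (μ := ν) hp (fun n => t_sec n x) (fun y => t_mono (x, y))
      fun y => t_lim (x, y)).liminf_eq]
    refine liminf_le_liminf (.of_forall fun n => ?_)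
    refine (eLpNorm_le_lintegral_mul_rpow_sub_one_div (HolderConjugate.one_le p q) hp
      (t_sec n x).aemeasurable (t_fin n x)).trans (lintegral_mono fun y => ?_)
    gcongr
    exact t_le n (x, y)

theorem essSup_le_of_forall_lintegral_mul_le [SigmaFinite μ] {f : α → ℝ≥0∞} (hf : Measurable f)
    {R : ℝ≥0∞}
    (h : ∀ g : α → ℝ≥0∞, Measurable g → eLpNorm g 1 μ ≤ 1 → ∫⁻ x, f x * g x ∂μ ≤ R) :
    essSup f μ ≤ R := by
  by_contra! hR
  obtain ⟨c, hRc, hc⟩ := exists_between hR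
  have superlevel_pos : 0 < μ {x | c < f x} := by
    refine pos_iff_ne_zero.2 fun h₀ => hc.not_ge (essSup_le_of_ae_le c ?_)
    simpa only [EventuallyLE, ae_iff, not_le] using h₀
  obtain ⟨E, hE, hE_sub, hE_pos, hE_fin⟩ :=
    Measure.exists_subset_measure_lt_top (measurableSet_lt measurable_const hf) superlevel_pos
  have test_le := h (E.indicator fun _ => (μ E)⁻¹) (measurable_const.indicator hE) (by
    rw [eLpNorm_one_ennreal_eq_lintegral, lintegral_indicator_const hE]
    exact ENNReal.inv_mul_le_one _)
  refine (hRc.trans_le ?_).not_ge test_le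
  calc c = ∫⁻ _ in E, c * (μ E)⁻¹ ∂μ := by
        rw [setLIntegral_const, mul_assoc, ENNReal.inv_mul_cancel hE_pos.ne' hE_fin.ne, mul_one]
    _ ≤ ∫⁻ x in E, f x * (μ E)⁻¹ ∂μ :=
        setLIntegral_mono' hE fun x hx => mul_le_mul_left (hE_sub hx).le _
    _ = ∫⁻ x, f x * E.indicator (fun _ => (μ E)⁻¹) x ∂μ := by
        rw [← lintegral_indicator hE]
        congr 1 with x
        by_cases hx : x ∈ E <;> simp [hx]

theorem eLpNorm_le_of_forall_lintegral_mul_le [SigmaFinite μ] [p.HolderConjugate q]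
    {f : α → ℝ≥0∞} (hf : Measurable f) {R : ℝ≥0∞}
    (h : ∀ g : α → ℝ≥0∞, Measurable g → eLpNorm g q μ ≤ 1 → ∫⁻ x, f x * g x ∂μ ≤ R) :
    eLpNorm f p μ ≤ R := by
  rcases eq_or_ne p ∞ with rfl | hp
  · obtain rfl : q = 1 := (HolderConjugate.eq_top_iff_eq_one ∞ q).1 rfl
    exact (eLpNorm_top_ennreal_eq_essSup f).trans_le (essSup_le_of_forall_lintegral_mul_le hf h)
  obtain ⟨k, k_meas, k_norm, hk⟩ := exists_eLpNorm_le_liminf_lintegral_mul (α := Unit) (ν := μ)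
    (q := q) hp (hf.comp measurable_snd)
  refine (hk ()).trans (liminf_le_of_le (by isBoundedDefault) fun b hb => ?_)
  obtain ⟨n, hn⟩ := hb.exists
  exact hn.trans (h _ ((k_meas n).comp measurable_prodMk_left) (k_norm n ()))

theorem eLpNorm_lintegral_le [SFinite μ] [SigmaFinite ν] (hp : 1 ≤ p) {f : α × β → ℝ≥0∞}
    (hf : Measurable f) :
    eLpNorm (fun y => ∫⁻ x, f (x, y) ∂μ) p ν ≤ ∫⁻ x, eLpNorm (fun y => f (x, y)) p ν ∂μ := by
  have := HolderConjugate.conjExponent hp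
  refine eLpNorm_le_of_forall_lintegral_mul_le (q := p.conjExponent) hf.lintegral_prod_left'
    fun g hg hg_norm => ?_
  calc ∫⁻ y, (∫⁻ x, f (x, y) ∂μ) * g y ∂ν
      = ∫⁻ y, ∫⁻ x, f (x, y) * g y ∂μ ∂ν := lintegral_congr fun y =>
        (lintegral_mul_const _ (by fun_prop)).symm
    _ = ∫⁻ x, ∫⁻ y, f (x, y) * g y ∂ν ∂μ := lintegral_lintegral_swap (by fun_prop)
    _ ≤ ∫⁻ x, eLpNorm (fun y => f (x, y)) p ν ∂μ := lintegral_mono fun x =>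
        (lintegral_mul_le_eLpNorm_mul_eLpNorm (p := p) (q := p.conjExponent) (by fun_prop)
          hg.aemeasurable).trans (mul_le_of_le_one_right' hg_norm)

theorem eLpNorm_eLpNorm_le_of_forall_lintegral_mul_le [SigmaFinite μ] [SigmaFinite ν]
    {p' q' : ℝ≥0∞} [p.HolderConjugate p'] [q.HolderConjugate q'] (hq : q ≠ ∞)
    {f : α × β → ℝ≥0∞} (hf : Measurable f) {R : ℝ≥0∞}
    (h : ∀ k : α × β → ℝ≥0∞, Measurable k →
      eLpNorm (fun x => eLpNorm (fun y => k (x, y)) q' ν) p' μ ≤ 1 →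
      ∫⁻ x, ∫⁻ y, f (x, y) * k (x, y) ∂ν ∂μ ≤ R) :
    eLpNorm (fun x => eLpNorm (fun y => f (x, y)) q ν) p μ ≤ R := by
  obtain ⟨k, k_meas, k_norm, hk⟩ := exists_eLpNorm_le_liminf_lintegral_mul (ν := ν) (q := q') hq hf
  refine eLpNorm_le_of_forall_lintegral_mul_le (q := p') (measurable_eLpNorm_prodMk hf)
    fun g hg hg_norm => ?_
  have test_le : ∀ n, ∫⁻ x, (∫⁻ y, f (x, y) * k n (x, y) ∂ν) * g x ∂μ ≤ R := fun n => by
    have k_norm_le : eLpNorm (fun x => eLpNorm (fun y => g x * k n (x, y)) q' ν) p' μ ≤ 1 := by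
      refine (eLpNorm_ennreal_mono fun x => ?_).trans hg_norm
      have k_meas_n := k_meas n
      rw [eLpNorm_ennreal_const_mul (by fun_prop)]
      exact mul_le_of_le_one_right' (k_norm n x)
    refine le_trans (lintegral_mono fun x => ?_)
      (h (fun z => g z.1 * k n z) (by have := k_meas n; fun_prop) k_norm_le)
    rw [← lintegral_mul_const _ (by have := k_meas n; fun_prop)]
    exact (lintegral_congr fun y => by ring).le
  calc ∫⁻ x, eLpNorm (fun y => f (x, y)) q ν * g x ∂μ
      ≤ ∫⁻ x, liminf (fun n => (∫⁻ y, f (x, y) * k n (x, y) ∂ν) * g x) atTop ∂μ :=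
        lintegral_mono fun x => (mul_le_mul_left (hk x) (g x)).trans <| by
          simpa only [liminf_const, Pi.mul_def] using
            ENNReal.le_liminf_mul (v := fun _ : ℕ => g x) (f := atTop)
    _ ≤ liminf (fun n => ∫⁻ x, (∫⁻ y, f (x, y) * k n (x, y) ∂ν) * g x ∂μ) atTop :=
        lintegral_liminf_le fun n => (hf.mul (k_meas n)).lintegral_prod_right'.mul hg
    _ ≤ R := liminf_le_of_le (by isBoundedDefault) fun b hb =>
        hb.exists.elim fun n hn => hn.trans (test_le n)

end ELpNorm

section ProductNorm

variable {α β : Type*} [MeasurableSpace α] [MeasurableSpace β] {μ : Measure α} {ν : Measure β}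
  {p q : ℝ≥0∞}

theorem essSup_prod_le [SFinite ν] {f : α × β → ℝ≥0∞} (hf : Measurable f) :
    essSup f (μ.prod ν) ≤ essSup (fun x => essSup (fun y => f (x, y)) ν) μ := by
  refine essSup_le_of_ae_le _ ?_
  change ∀ᵐ z ∂μ.prod ν, f z ≤ _
  rw [Measure.ae_prod_iff_ae_ae (measurableSet_le hf measurable_const)]
  filter_upwards [ENNReal.ae_le_essSup fun x => essSup (fun y => f (x, y)) ν] with x hx
  filter_upwards [ENNReal.ae_le_essSup fun y => f (x, y)] with y hy using hy.trans hx

theorem eLpNorm_prod_le [SFinite ν] {f : α × β → ℝ≥0∞} (hf : Measurable f) :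
    eLpNorm f p (μ.prod ν) ≤ eLpNorm (fun x => eLpNorm (fun y => f (x, y)) p ν) p μ := by
  rcases eq_or_ne p 0 with rfl | hp
  · simp only [eLpNorm_exponent_zero, le_refl]
  rcases eq_or_ne p ∞ with rfl | hp'
  · simpa only [eLpNorm_top_ennreal_eq_essSup] using essSup_prod_le hf
  simp only [eLpNorm_ennreal_eq_lintegral hp hp', ← ENNReal.rpow_mul,
    one_div_mul_cancel (toReal_pos hp hp').ne', ENNReal.rpow_one]
  rw [lintegral_prod _ (by fun_prop)]

theorem eLpNorm_prod_symm_le [SFinite μ] [SFinite ν] {f : α × β → ℝ≥0∞} (hf : Measurable f) :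
    eLpNorm f p (μ.prod ν) ≤ eLpNorm (fun y => eLpNorm (fun x => f (x, y)) p μ) p ν := by
  rw [← eLpNorm_comp_measurePreserving (ν := μ.prod ν) hf.aestronglyMeasurable
    Measure.measurePreserving_swap]
  exact eLpNorm_prod_le (hf.comp measurable_swap)

theorem lintegral_prod_mul_le_eLpNorm_mul_eLpNorm [SFinite μ] [SFinite ν] {p' q' : ℝ≥0∞}
    [p.HolderConjugate p'] [q.HolderConjugate q'] {f g : α × β → ℝ≥0∞} (hf : Measurable f)
    (hg : Measurable g) :
    ∫⁻ z, f z * g z ∂μ.prod ν ≤ eLpNorm (fun y => eLpNorm (fun x => f (x, y)) p μ) q ν *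
      eLpNorm (fun y => eLpNorm (fun x => g (x, y)) p' μ) q' ν := by
  rw [lintegral_prod_symm' (fun z => f z * g z) (hf.mul hg)]
  have norm_meas : ∀ {h : α × β → ℝ≥0∞} {e : ℝ≥0∞}, Measurable h →
      AEMeasurable (fun y => eLpNorm (fun x => h (x, y)) e μ) ν := fun hh =>
    (measurable_eLpNorm_prodMk (hh.comp measurable_swap)).aemeasurable
  exact (lintegral_mono fun y => lintegral_mul_le_eLpNorm_mul_eLpNorm (p := p) (q := p')
      (by fun_prop) (by fun_prop)).trans
    (lintegral_mul_le_eLpNorm_mul_eLpNorm (norm_meas hf) (norm_meas hg))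

end ProductNorm

section Young

theorem lintegral_mul_le_three_holder {Ω : Type*} [MeasurableSpace Ω] {μ : Measure Ω} {a b c : ℝ}
    (ha : 0 < a) (hc : 0 < c) (hab : b⁻¹ ≤ a⁻¹) (hcb : b⁻¹ ≤ c⁻¹) (hb : 0 < b)
    (h : 1 + b⁻¹ = a⁻¹ + c⁻¹) {f g : Ω → ℝ≥0∞} (hf : Measurable f) (hg : Measurable g) :
    ∫⁻ x, f x * g x ∂μ ≤ (∫⁻ x, f x ^ a * g x ^ c ∂μ) ^ b⁻¹ *
      ((∫⁻ x, f x ^ a ∂μ) ^ (a⁻¹ - b⁻¹) * (∫⁻ x, g x ^ c ∂μ) ^ (c⁻¹ - b⁻¹)) := by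
  have rpow_split : ∀ {t : ℝ≥0∞} {e : ℝ}, 0 < e → b⁻¹ ≤ e⁻¹ →
      (t ^ e) ^ b⁻¹ * (t ^ e) ^ (e⁻¹ - b⁻¹) = t := fun {t e} he hbe => by
    rw [← ENNReal.rpow_add_of_nonneg _ _ (by positivity) (sub_nonneg.2 hbe), add_sub_cancel,
      ENNReal.rpow_rpow_inv he.ne']
  have factorization : ∀ x, f x * g x = (f x ^ a * g x ^ c) ^ b⁻¹ *
      ((f x ^ a) ^ (a⁻¹ - b⁻¹) * (g x ^ c) ^ (c⁻¹ - b⁻¹)) := fun x => by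
    rw [ENNReal.mul_rpow_of_nonneg _ _ (by positivity), mul_mul_mul_comm, rpow_split ha hab,
      rpow_split hc hcb]
  have holder := ENNReal.lintegral_prod_norm_pow_le (μ := μ) Finset.univ
    (f := ![fun x => f x ^ a * g x ^ c, fun x => f x ^ a, fun x => g x ^ c])
    (p := ![b⁻¹, a⁻¹ - b⁻¹, c⁻¹ - b⁻¹])
    (fun i _ => by
      fin_cases i
      exacts [((hf.pow_const a).mul (hg.pow_const c)).aemeasurable, (hf.pow_const a).aemeasurable,
        (hg.pow_const c).aemeasurable])
    (by rw [Fin.sum_univ_three]; change b⁻¹ + (a⁻¹ - b⁻¹) + (c⁻¹ - b⁻¹) = 1; linarith)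
    (fun i _ => by fin_cases i; exacts [inv_nonneg.2 hb.le, sub_nonneg.2 hab, sub_nonneg.2 hcb])
  simp only [Fin.prod_univ_three, mul_assoc] at holder
  exact (lintegral_congr factorization).trans_le holder

variable {X : Type*} [AddCommGroup X] [MeasurableSpace X] [MeasurableAdd₂ X] {μ : Measure X}
  [μ.IsAddLeftInvariant] {α β γ δ b : ℝ≥0∞}

theorem eLpNorm_translate {f : X → ℝ≥0∞} (hf : Measurable f) (p : ℝ≥0∞) (y : X) :
    eLpNorm (fun x => f (x + y)) p μ = eLpNorm f p μ :=
  eLpNorm_comp_measurePreserving hf.aestronglyMeasurable (measurePreserving_add_right μ y)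

variable [SFinite μ]

theorem lintegral_lintegral_translate_mul {f g : X → ℝ≥0∞} (hf : Measurable f)
    (hg : Measurable g) :
    ∫⁻ y, ∫⁻ x, f (x + y) * g x ∂μ ∂μ = (∫⁻ x, f x ∂μ) * ∫⁻ x, g x ∂μ := by
  rw [lintegral_lintegral_swap (by fun_prop), ← lintegral_const_mul _ hg]
  refine lintegral_congr fun x => ?_
  rw [lintegral_mul_const _ (by fun_prop), lintegral_add_left_eq_self f x]

theorem eLpNorm_lintegral_translate_mul_le_real {a b c : ℝ} (ha : 0 < a) (hc : 0 < c)
    (hab : b⁻¹ ≤ a⁻¹) (hcb : b⁻¹ ≤ c⁻¹) (hb : 0 < b) (h : 1 + b⁻¹ = a⁻¹ + c⁻¹) {f g : X → ℝ≥0∞}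
    (hf : Measurable f) (hg : Measurable g) :
    eLpNorm (fun y => ∫⁻ x, f (x + y) * g x ∂μ) (ENNReal.ofReal b) μ ≤
      (∫⁻ x, f x ^ a ∂μ) ^ a⁻¹ * (∫⁻ x, g x ^ c ∂μ) ^ c⁻¹ := by
  have hbinv : 0 < b⁻¹ := inv_pos.2 hb
  set A := ∫⁻ x, f x ^ a ∂μ
  set C := ∫⁻ x, g x ^ c ∂μ
  set J : X → ℝ≥0∞ := fun y => ∫⁻ x, f (x + y) ^ a * g x ^ c ∂μ
  have hJ : Measurable J := Measurable.lintegral_prod_right'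
    (f := fun z : X × X => f (z.2 + z.1) ^ a * g z.2 ^ c) (by fun_prop)
  have pointwise : ∀ y, ∫⁻ x, f (x + y) * g x ∂μ ≤ J y ^ b⁻¹ *
      (A ^ (a⁻¹ - b⁻¹) * C ^ (c⁻¹ - b⁻¹)) := fun y => by
    have holder := lintegral_mul_le_three_holder (μ := μ) ha hc hab hcb hb h
      (f := fun x => f (x + y)) (by fun_prop) hg
    rwa [lintegral_add_right_eq_self (fun x => f x ^ a) y] at holder
  have J_norm : eLpNorm (fun y => J y ^ b⁻¹) (ENNReal.ofReal b) μ = (A * C) ^ b⁻¹ := by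
    rw [eLpNorm_ennreal_rpow hbinv, ← ofReal_mul hb.le, mul_inv_cancel₀ hb.ne', ENNReal.ofReal_one,
      eLpNorm_one_ennreal_eq_lintegral,
      lintegral_lintegral_translate_mul (hf.pow_const a) (hg.pow_const c)]
  calc eLpNorm (fun y => ∫⁻ x, f (x + y) * g x ∂μ) (ENNReal.ofReal b) μ
      ≤ (A * C) ^ b⁻¹ * (A ^ (a⁻¹ - b⁻¹) * C ^ (c⁻¹ - b⁻¹)) := by
        rw [← J_norm, ← eLpNorm_ennreal_mul_const (hJ.pow_const _).aemeasurable]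
        exact eLpNorm_ennreal_mono pointwise
    _ = A ^ a⁻¹ * C ^ c⁻¹ := by
        rw [ENNReal.mul_rpow_of_nonneg _ _ hbinv.le, mul_mul_mul_comm,
          ← ENNReal.rpow_add_of_nonneg _ _ hbinv.le (sub_nonneg.2 hab),
          ← ENNReal.rpow_add_of_nonneg _ _ hbinv.le (sub_nonneg.2 hcb), add_sub_cancel,
          add_sub_cancel]

theorem eLpNorm_lintegral_translate_mul_le_of_ne_top (hα : 1 ≤ α) (hγ : 1 ≤ γ) (hb : b ≠ ∞)
    (h : 1 + b⁻¹ = α⁻¹ + γ⁻¹) {f g : X → ℝ≥0∞} (hf : Measurable f) (hg : Measurable g) :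
    eLpNorm (fun y => ∫⁻ x, f (x + y) * g x ∂μ) b μ ≤ eLpNorm f α μ * eLpNorm g γ μ := by
  have hαinv : α⁻¹ ≤ 1 := ENNReal.inv_le_one.2 hα
  have hγinv : γ⁻¹ ≤ 1 := ENNReal.inv_le_one.2 hγ
  have hb₀ : b ≠ 0 := fun hb₀ => by
    rw [hb₀, ENNReal.inv_zero, add_top] at h
    exact (add_lt_top.2 ⟨hαinv.trans_lt one_lt_top, hγinv.trans_lt one_lt_top⟩).ne h.symm
  have hreal : 1 + b.toReal⁻¹ = α.toReal⁻¹ + γ.toReal⁻¹ := by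
    simp only [← toReal_inv]
    rw [← toReal_add (hαinv.trans_lt one_lt_top).ne (hγinv.trans_lt one_lt_top).ne, ← h,
      toReal_add one_ne_top (ENNReal.inv_ne_top.2 hb₀), toReal_one]
  have hαreal : α.toReal⁻¹ ≤ 1 := by simpa using toReal_mono one_ne_top hαinv
  have hγreal : γ.toReal⁻¹ ≤ 1 := by simpa using toReal_mono one_ne_top hγinv
  have hb_pos : 0 < b.toReal := toReal_pos hb₀ hb
  have hbinv_pos : 0 < b.toReal⁻¹ := inv_pos.2 hb_pos
  have hα_pos : 0 < α.toReal := inv_pos.1 (by linarith)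
  have hγ_pos : 0 < γ.toReal := inv_pos.1 (by linarith)
  rw [eLpNorm_ennreal_eq_lintegral (zero_lt_one.trans_le hα).ne' (toReal_pos_iff.1 hα_pos).2.ne,
    eLpNorm_ennreal_eq_lintegral (zero_lt_one.trans_le hγ).ne' (toReal_pos_iff.1 hγ_pos).2.ne,
    one_div, one_div, ← ofReal_toReal hb]
  exact eLpNorm_lintegral_translate_mul_le_real hα_pos hγ_pos (by linarith) (by linarith) hb_pos
    hreal hf hg

theorem eLpNorm_lintegral_translate_mul_le (hα : 1 ≤ α) (hγ : 1 ≤ γ)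
    (h : 1 + b⁻¹ = α⁻¹ + γ⁻¹) {f g : X → ℝ≥0∞} (hf : Measurable f) (hg : Measurable g) :
    eLpNorm (fun y => ∫⁻ x, f (x + y) * g x ∂μ) b μ ≤ eLpNorm f α μ * eLpNorm g γ μ := by
  rcases eq_or_ne b ∞ with rfl | hb
  · have : α.HolderConjugate γ := ⟨by simpa using h.symm⟩
    rw [eLpNorm_top_ennreal_eq_essSup]
    refine essSup_le_of_ae_le _ (ae_of_all _ fun y => ?_)
    refine (lintegral_mul_le_eLpNorm_mul_eLpNorm (p := α) (q := γ) (by fun_prop)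
      hg.aemeasurable).trans_eq ?_
    rw [eLpNorm_translate hf]
  · exact eLpNorm_lintegral_translate_mul_le_of_ne_top hα hγ hb h hf hg

end Young

section MixedYoung

variable {X : Type*} [AddCommGroup X] [MeasurableSpace X] [MeasurableAdd₂ X] {μ : Measure X}
  [μ.IsAddLeftInvariant] [SigmaFinite μ] {α β γ δ b : ℝ≥0∞}

theorem one_le_of_one_add_inv_eq (hα : 1 ≤ α) (hγ : 1 ≤ γ) (h : 1 + b⁻¹ = α⁻¹ + γ⁻¹) : 1 ≤ b := by
  have : 1 + b⁻¹ ≤ 1 + 1 := h.trans_le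
    (add_le_add (ENNReal.inv_le_one.2 hα) (ENNReal.inv_le_one.2 hγ))
  exact ENNReal.inv_le_one.1 ((ENNReal.add_le_add_iff_left one_ne_top).1 this)

theorem eLpNorm_lintegral_lintegral_translate_mul_le (hα : 1 ≤ α) (hβ : 1 ≤ β) (hγ : 1 ≤ γ)
    (hδ : 1 ≤ δ) (h : 1 + b⁻¹ = α⁻¹ + γ⁻¹) (h' : 1 + b⁻¹ = β⁻¹ + δ⁻¹) {F K : X × X → ℝ≥0∞}
    (hF : Measurable F) (hK : Measurable K) :
    eLpNorm (fun ζ : X × X => ∫⁻ x, ∫⁻ ω, F (x + ζ.2, ω) * K (x, ω + ζ.1) ∂μ ∂μ) b (μ.prod μ) ≤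
      eLpNorm (fun x => eLpNorm (fun ω => F (x, ω)) β μ) α μ *
        eLpNorm (fun x => eLpNorm (fun ω => K (x, ω)) δ μ) γ μ := by
  have hb : 1 ≤ b := one_le_of_one_add_inv_eq hα hγ h
  have young_inner : ∀ x y, eLpNorm (fun ξ => ∫⁻ ω, F (x + y, ω) * K (x, ω + ξ) ∂μ) b μ ≤
      eLpNorm (fun ω => F (x + y, ω)) β μ * eLpNorm (fun ω => K (x, ω)) δ μ := fun x y => by
    simpa only [mul_comm] using eLpNorm_lintegral_translate_mul_le (μ := μ) hδ hβ
      (h'.trans (add_comm _ _)) (f := fun ω => K (x, ω)) (g := fun ω => F (x + y, ω))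
      (by fun_prop) (by fun_prop)
  refine (eLpNorm_prod_symm_le ?_).trans (le_trans (eLpNorm_ennreal_mono fun y => ?_)
    (eLpNorm_lintegral_translate_mul_le hα hγ h (measurable_eLpNorm_prodMk hF)
      (measurable_eLpNorm_prodMk hK)))
  · fun_prop
  · refine (eLpNorm_lintegral_le hb
      (f := fun z : X × X => ∫⁻ ω, F (z.1 + y, ω) * K (z.1, ω + z.2) ∂μ) (by fun_prop)).trans ?_
    exact lintegral_mono fun x => young_inner x y

theorem eLpNorm_eLpNorm_translate_mul_le {c : ℝ≥0∞} (hc₀ : c ≠ 0) (hc : c ≠ ∞) (hα : c ≤ α)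
    (hβ : c ≤ β) (hγ : c ≤ γ) (hδ : c ≤ δ) (h : c⁻¹ + b⁻¹ = α⁻¹ + γ⁻¹)
    (h' : c⁻¹ + b⁻¹ = β⁻¹ + δ⁻¹) {F K : X × X → ℝ≥0∞} (hF : Measurable F) (hK : Measurable K) :
    eLpNorm (fun ζ : X × X => eLpNorm (fun z : X × X =>
        F (z.1 + ζ.2, z.2) * K (z.1, z.2 + ζ.1)) c (μ.prod μ)) b (μ.prod μ) ≤
      eLpNorm (fun x => eLpNorm (fun ω => F (x, ω)) β μ) α μ *
        eLpNorm (fun x => eLpNorm (fun ω => K (x, ω)) δ μ) γ μ := by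
  have ht : 0 < c.toReal := toReal_pos hc₀ hc
  have one_le_div : ∀ {x : ℝ≥0∞}, c ≤ x → 1 ≤ x / c := fun hx =>
    (ENNReal.le_div_iff_mul_le (.inl hc₀) (.inl hc)).2 (by rwa [one_mul])
  have scale_eq : ∀ {x y : ℝ≥0∞}, c⁻¹ + b⁻¹ = x⁻¹ + y⁻¹ →
      1 + (b / c)⁻¹ = (x / c)⁻¹ + (y / c)⁻¹ := fun {x y} hxy => by
    rw [ENNReal.inv_div (.inl hc) (.inl hc₀), ENNReal.inv_div (.inl hc) (.inl hc₀),
      ENNReal.inv_div (.inl hc) (.inl hc₀), div_eq_mul_inv, div_eq_mul_inv, div_eq_mul_inv,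
      ← mul_add, ← hxy, mul_add, ENNReal.mul_inv_cancel hc₀ hc]
  have norm_rpow : ∀ (G : X × X → ℝ≥0∞) (x y : ℝ≥0∞),
      eLpNorm (fun x => eLpNorm (fun ω => G (x, ω) ^ c.toReal) (y / c) μ) (x / c) μ =
        eLpNorm (fun x => eLpNorm (fun ω => G (x, ω)) y μ) x μ ^ c.toReal := fun G x y => by
    simp only [eLpNorm_ennreal_rpow ht, ofReal_toReal hc, ENNReal.div_mul_cancel hc₀ hc]
  have young := eLpNorm_lintegral_lintegral_translate_mul_le (μ := μ) (one_le_div hα)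
    (one_le_div hβ) (one_le_div hγ) (one_le_div hδ) (scale_eq h) (scale_eq h')
    (hF.pow_const c.toReal) (hK.pow_const c.toReal)
  rw [norm_rpow, norm_rpow, ← ENNReal.mul_rpow_of_nonneg _ _ ht.le] at young
  have inner_eq : ∀ ζ : X × X, eLpNorm (fun z : X × X => F (z.1 + ζ.2, z.2) * K (z.1, z.2 + ζ.1))
      c (μ.prod μ) = (∫⁻ x, ∫⁻ ω, F (x + ζ.2, ω) ^ c.toReal * K (x, ω + ζ.1) ^ c.toReal ∂μ ∂μ) ^
        c.toReal⁻¹ := fun ζ => by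
    simp only [eLpNorm_ennreal_eq_lintegral hc₀ hc, ENNReal.mul_rpow_of_nonneg _ _ ht.le, one_div]
    rw [lintegral_prod _ (by fun_prop)]
  simp only [inner_eq]
  rw [eLpNorm_ennreal_rpow (inv_pos.2 ht), ofReal_inv_of_pos ht, ofReal_toReal hc,
    ← div_eq_mul_inv, ENNReal.rpow_inv_le_iff ht]
  exact young

theorem lintegral_lintegral_twisted_mul_eq [MeasurableNeg X] {V : (X × X) × (X × X) → ℝ≥0∞}
    {F K : X × X → ℝ≥0∞} (hV : Measurable V) (hF : Measurable F) (hK : Measurable K) :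
    ∫⁻ x, ∫⁻ η, (∫⁻ ω, ∫⁻ y, V ((x, ω), (η - ω, y)) * F (x + y, ω) ∂μ ∂μ) * K (x, η) ∂μ ∂μ =
      ∫⁻ w : (X × X) × (X × X), V w *
        (F (w.1.1 + w.2.2, w.1.2) * K (w.1.1, w.1.2 + w.2.1)) ∂(μ.prod μ).prod (μ.prod μ) := by
  rw [lintegral_prod _ (by fun_prop), lintegral_prod _ (by fun_prop)]
  refine lintegral_congr fun x => ?_
  calc ∫⁻ η, (∫⁻ ω, ∫⁻ y, V ((x, ω), (η - ω, y)) * F (x + y, ω) ∂μ ∂μ) * K (x, η) ∂μ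
      = ∫⁻ η, ∫⁻ ω, ∫⁻ y, V ((x, ω), (η - ω, y)) * F (x + y, ω) * K (x, η) ∂μ ∂μ ∂μ := by
        refine lintegral_congr fun η => ?_
        rw [← lintegral_mul_const _ (by fun_prop)]
        refine lintegral_congr fun ω => ?_
        rw [← lintegral_mul_const _ (by fun_prop)]
    _ = ∫⁻ ω, ∫⁻ η, ∫⁻ y, V ((x, ω), (η - ω, y)) * F (x + y, ω) * K (x, η) ∂μ ∂μ ∂μ :=
        lintegral_lintegral_swap (by fun_prop)
    _ = ∫⁻ ω, ∫⁻ ξ, ∫⁻ y, V ((x, ω), (ξ, y)) * (F (x + y, ω) * K (x, ω + ξ)) ∂μ ∂μ ∂μ := by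
        refine lintegral_congr fun ω => ?_
        rw [← lintegral_add_left_eq_self _ ω]
        simp only [add_sub_cancel_left, mul_assoc]
    _ = _ := lintegral_congr fun ω => by rw [lintegral_prod _ (by fun_prop)]

theorem eLpNorm_eLpNorm_twisted_le [MeasurableNeg X] {e e' τ τ' p c q q' σ : ℝ≥0∞}
    [e.HolderConjugate e'] [τ.HolderConjugate τ'] [p.HolderConjugate c] [q.HolderConjugate q']
    (hτ : τ ≠ ∞) (hc : c ≠ ∞)
    (hα : c ≤ α) (he : c ≤ e') (hσ : c ≤ σ) (hτ' : c ≤ τ') (h : c⁻¹ + q'⁻¹ = α⁻¹ + e'⁻¹)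
    (h' : c⁻¹ + q'⁻¹ = σ⁻¹ + τ'⁻¹) {V : (X × X) × (X × X) → ℝ≥0∞} {F : X × X → ℝ≥0∞}
    (hV : Measurable V) (hF : Measurable F) :
    eLpNorm (fun x => eLpNorm (fun η =>
        ∫⁻ ω, ∫⁻ y, V ((x, ω), (η - ω, y)) * F (x + y, ω) ∂μ ∂μ) τ μ) e μ ≤
      eLpNorm (fun ζ => eLpNorm (fun z => V (z, ζ)) p (μ.prod μ)) q (μ.prod μ) *
        eLpNorm (fun y => eLpNorm (fun ω => F (y, ω)) σ μ) α μ := by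
  refine eLpNorm_eLpNorm_le_of_forall_lintegral_mul_le (p' := e') (q' := τ') hτ
    (f := fun z => ∫⁻ ω, ∫⁻ y, V ((z.1, ω), (z.2 - ω, y)) * F (z.1 + y, ω) ∂μ ∂μ)
    (by fun_prop) fun K hK hK_norm => ?_
  have young := eLpNorm_eLpNorm_translate_mul_le (μ := μ) (HolderConjugate.ne_zero c p) hc
    hα hσ he hτ' h h' hF hK
  refine (lintegral_lintegral_twisted_mul_eq hV hF hK).trans_le
    ((lintegral_prod_mul_le_eLpNorm_mul_eLpNorm (p := p) (p' := c) (q := q) (q' := q') hV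
      (by fun_prop)).trans ?_)
  gcongr
  exact young.trans (mul_le_of_le_one_right' hK_norm)

end MixedYoung

section Truncation

variable {X : Type*} [MeasurableSpace X] {μ : Measure X} {u : X → ℝ} {r ρ A : ℝ}

theorem eLpNorm_ofReal_eq_lintegral {F : Type*} [NormedAddCommGroup F] (f : X → F) {s : ℝ}
    (hs : 0 < s) : eLpNorm f (ENNReal.ofReal s) μ =
      (∫⁻ x, ENNReal.ofReal (‖f x‖ ^ s) ∂μ) ^ (1 / s) := by
  rw [eLpNorm_eq_lintegral_rpow_enorm_toReal (ENNReal.ofReal_pos.2 hs).ne' ofReal_ne_top,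
    ENNReal.toReal_ofReal hs.le]
  simp only [← ofReal_norm, ENNReal.ofReal_rpow_of_nonneg (norm_nonneg _) hs.le]

theorem setLIntegral_compl_truncation_le (hu : Measurable u) (hu0 : ∀ x, 0 ≤ u x) (hr : 1 < r)
    (hA : 0 < A) (h : ∫⁻ x, ENNReal.ofReal (u x ^ r) ∂μ ≤ ENNReal.ofReal A) {t : ℝ} (ht : 0 < t) :
    ∫⁻ x in {x | t * u x ^ (r - 1) ≤ 2 * A}ᶜ, ENNReal.ofReal (u x) ∂μ ≤ ENNReal.ofReal (t / 2) := by
  have hS : MeasurableSet {x | t * u x ^ (r - 1) ≤ 2 * A} :=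
    measurableSet_le (by fun_prop) measurable_const
  have pointwise : ∀ x ∈ {x | t * u x ^ (r - 1) ≤ 2 * A}ᶜ, u x ≤ t / (2 * A) * u x ^ r := by
    intro x hx
    have hx' : 2 * A < t * u x ^ (r - 1) := not_le.1 hx
    have split : u x ^ r = u x * u x ^ (r - 1) := by
      nth_rw 2 [← Real.rpow_one (u x)]
      rw [← Real.rpow_add' (hu0 x) (by linarith), add_sub_cancel]
    rw [split, div_mul_eq_mul_div, le_div_iff₀ (by positivity)]
    nlinarith [hu0 x]
  calc ∫⁻ x in {x | t * u x ^ (r - 1) ≤ 2 * A}ᶜ, ENNReal.ofReal (u x) ∂μ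
      ≤ ∫⁻ x, ENNReal.ofReal (t / (2 * A)) * ENNReal.ofReal (u x ^ r) ∂μ := by
        refine (setLIntegral_mono' hS.compl fun x hx => ?_).trans (setLIntegral_le_lintegral _ _)
        rw [← ENNReal.ofReal_mul (by positivity)]
        exact ENNReal.ofReal_le_ofReal (pointwise x hx)
    _ ≤ ENNReal.ofReal (t / (2 * A)) * ENNReal.ofReal A := by
        rw [lintegral_const_mul _ (by fun_prop)]
        gcongr
    _ = ENNReal.ofReal (t / 2) := by
        rw [← ENNReal.ofReal_mul (by positivity)]
        congr 1
        field_simp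

theorem setLIntegral_Ioc_rpow_sub_one {e c : ℝ} (he : 0 < e) (hc : 0 ≤ c) :
    ∫⁻ t in Ioc 0 c, ENNReal.ofReal (t ^ (e - 1)) = ENNReal.ofReal (c ^ e / e) := by
  have he' : -1 < e - 1 := by linarith
  rw [← ofReal_integral_eq_lintegral_ofReal, ← intervalIntegral.integral_of_le hc,
    integral_rpow (Or.inl he'), sub_add_cancel, Real.zero_rpow he.ne', sub_zero]
  · exact (intervalIntegrable_iff_integrableOn_Ioc_of_le hc).1
      (intervalIntegral.intervalIntegrable_rpow' he')
  · filter_upwards [self_mem_ae_restrict measurableSet_Ioc] with t ht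
    exact Real.rpow_nonneg ht.1.le _

theorem setLIntegral_Ioi_truncation (hrρ : r.HolderConjugate ρ) (hρ : 2 < ρ) {b B : ℝ}
    (hb : 0 ≤ b) (hB : 0 ≤ B) :
    ∫⁻ t in Ioi 0, {t | t * b ^ (r - 1) ≤ B}.indicator
        (fun t => ENNReal.ofReal (t ^ (ρ - 3)) * ENNReal.ofReal (b ^ 2)) t =
      ENNReal.ofReal (B ^ (ρ - 2) / (ρ - 2)) * ENNReal.ofReal (b ^ r) := by
  rcases hb.eq_or_lt with rfl | hb
  · simp [Real.zero_rpow hrρ.ne_zero]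
  have hS : MeasurableSet {t : ℝ | t * b ^ (r - 1) ≤ B} :=
    measurableSet_le (by fun_prop) measurable_const
  have inter : {t : ℝ | t * b ^ (r - 1) ≤ B} ∩ Ioi 0 = Ioc 0 (B / b ^ (r - 1)) := by
    ext t
    simp only [mem_inter_iff, mem_ofPred_eq, mem_Ioi, mem_Ioc, and_comm,
      le_div_iff₀ (Real.rpow_pos_of_pos hb _)]
  have exponent : b ^ 2 = b ^ r * b ^ ((r - 1) * (ρ - 2)) := by
    rw [← Real.rpow_add hb, ← Real.rpow_natCast]
    congr 1
    push_cast
    nlinarith [hrρ.mul_eq_add]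
  rw [lintegral_indicator hS, Measure.restrict_restrict hS, inter,
    lintegral_mul_const _ (by fun_prop), show ρ - 3 = ρ - 2 - 1 by ring,
    setLIntegral_Ioc_rpow_sub_one (by linarith) (by positivity),
    ← ENNReal.ofReal_mul (div_nonneg (by positivity) (by linarith)),
    ← ENNReal.ofReal_mul (div_nonneg (by positivity) (by linarith)),
    Real.div_rpow hB (by positivity), ← Real.rpow_mul hb.le, exponent]
  congr 1
  field_simp

theorem lintegral_Ioi_setLIntegral_truncation [SFinite μ] (hu : Measurable u) (hu0 : ∀ x, 0 ≤ u x)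
    (hrρ : r.HolderConjugate ρ) (hρ : 2 < ρ) {B : ℝ} (hB : 0 ≤ B) :
    ∫⁻ t in Ioi 0, ENNReal.ofReal (t ^ (ρ - 3)) *
        ∫⁻ x in {x | t * u x ^ (r - 1) ≤ B}, ENNReal.ofReal (u x ^ 2) ∂μ =
      ENNReal.ofReal (B ^ (ρ - 2) / (ρ - 2)) * ∫⁻ x, ENNReal.ofReal (u x ^ r) ∂μ := by
  have hS : MeasurableSet {z : ℝ × X | z.1 * u z.2 ^ (r - 1) ≤ B} :=
    measurableSet_le (by fun_prop) measurable_const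
  calc _ = ∫⁻ t in Ioi 0, ∫⁻ x, {z : ℝ × X | z.1 * u z.2 ^ (r - 1) ≤ B}.indicator
          (fun z => ENNReal.ofReal (z.1 ^ (ρ - 3)) * ENNReal.ofReal (u z.2 ^ 2)) (t, x) ∂μ := by
        refine lintegral_congr fun t => ?_
        rw [← lintegral_const_mul _ (by fun_prop), ← lintegral_indicator
          (measurableSet_le (by fun_prop) measurable_const)]
        rfl
    _ = ∫⁻ x, (∫⁻ t in Ioi 0, {z : ℝ × X | z.1 * u z.2 ^ (r - 1) ≤ B}.indicator
          (fun z => ENNReal.ofReal (z.1 ^ (ρ - 3)) * ENNReal.ofReal (u z.2 ^ 2)) (t, x)) ∂μ :=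
        lintegral_lintegral_swap (Measurable.indicator (by fun_prop) hS).aemeasurable
    _ = ∫⁻ x, ENNReal.ofReal (B ^ (ρ - 2) / (ρ - 2)) * ENNReal.ofReal (u x ^ r) ∂μ :=
        lintegral_congr fun x => setLIntegral_Ioi_truncation hrρ hρ (hu0 x) hB
    _ = _ := lintegral_const_mul _ (by fun_prop)

end Truncation

section HausdorffYoung

open FourierTransform

variable {E : Type*} [NormedAddCommGroup E] [InnerProductSpace ℝ E] [FiniteDimensional ℝ E]
  [MeasurableSpace E] [BorelSpace E]
variable {F : Type*} [NormedAddCommGroup F] [InnerProductSpace ℂ F] {g : E → F}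

theorem continuous_fourier (hg : Integrable g) : Continuous (𝓕 g) :=
  VectorFourier.fourierIntegral_continuous Real.continuous_fourierChar continuous_inner hg

theorem enorm_fourier_le_lintegral_enorm (g : E → F) (w : E) : ‖𝓕 g w‖ₑ ≤ ∫⁻ x, ‖g x‖ₑ := by
  refine (enorm_integral_le_lintegral_enorm _).trans_eq (lintegral_congr fun x => ?_)
  rw [← ofReal_norm, Circle.norm_smul, ofReal_norm]

theorem fourier_indicator_add_indicator_compl (hg : Integrable g) {S : Set E}
    (hS : MeasurableSet S) (w : E) : 𝓕 g w = 𝓕 (S.indicator g) w + 𝓕 (Sᶜ.indicator g) w := by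
  conv_lhs => rw [← indicator_self_add_compl S g]
  exact congrFun (VectorFourier.fourierIntegral_add (L := innerₗ E)
    Real.continuous_fourierChar continuous_inner (hg.indicator hS) (hg.indicator hS.compl)) w

theorem eLpNorm_fourier_eq_zero (hg : AEStronglyMeasurable g volume) {r : ℝ≥0∞} (hr : r ≠ 0)
    (h : eLpNorm g r volume = 0) (ρ : ℝ≥0∞) : eLpNorm (𝓕 g) ρ volume = 0 := by
  have hg0 := (eLpNorm_eq_zero_iff hg hr).1 h
  have fourier_zero : 𝓕 g = 0 := funext fun w => enorm_eq_zero.1 <| nonpos_iff_eq_zero.1 <|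
    (enorm_fourier_le_lintegral_enorm g w).trans_eq 
      ((lintegral_congr_ae (hg0.fun_comp enorm)).trans (by simp))
  rw [fourier_zero, eLpNorm_zero]

variable [CompleteSpace F]

theorem fourier_ae_eq_fourier_toLp (hg : Integrable g) (hg2 : MemLp g 2) :
    𝓕 g =ᵐ[volume] (𝓕 (hg2.toLp g) : Lp F 2 (volume : Measure E)) := by
  refine ae_eq_of_integral_contDiff_smul_eq (continuous_fourier hg).locallyIntegrable
    ((Lp.memLp _).locallyIntegrable one_le_two) fun φ hφ hφ_supp => ?_
  let ψ : 𝓢(E, ℂ) := (hφ_supp.comp_left (g := Complex.ofReal) rfl).toSchwartzMap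
    (Complex.ofRealCLM.contDiff.comp hφ)
  have weak := congrArg (fun T => T ψ) (Lp.fourier_toTemperedDistribution_eq (hg2.toLp g))
  simp only [TemperedDistribution.fourier_apply, Lp.toTemperedDistribution_apply] at weak
  have flip_inner : (innerₗ E).flip = innerₗ E := by ext; simp
  have flip := VectorFourier.integral_fourierIntegral_smul_eq_flip (f := ψ) (g := g)
    (L := innerₗ E) (μ := volume) (ν := volume) Real.continuous_fourierChar continuous_inner
    ψ.integrable hg
  rw [flip_inner] at flip
  calc ∫ x, φ x • 𝓕 g x
      = ∫ x, 𝓕 ψ x • g x := by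
        rw [SchwartzMap.fourier_coe]
        exact flip.symm
    _ = ∫ x, 𝓕 ψ x • hg2.toLp g x :=
        integral_congr_ae (hg2.coeFn_toLp.mono fun x hx => by simp only [hx])
    _ = ∫ x, φ x • (𝓕 (hg2.toLp g) : Lp F 2 (volume : Measure E)) x := weak

theorem eLpNorm_fourier_two (hg : Integrable g) (hg2 : MemLp g 2) :
    eLpNorm (𝓕 g) 2 volume = eLpNorm g 2 volume := by
  rw [eLpNorm_congr_ae (fourier_ae_eq_fourier_toLp hg hg2), ← eLpNorm_congr_ae hg2.coeFn_toLp,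
    ← Lp.enorm_def, ← Lp.enorm_def, ← ofReal_norm, ← ofReal_norm, Lp.norm_fourier_eq]

theorem volume_le_enorm_fourier_le (hg : Integrable g) {S : Set E} (hS : MeasurableSet S)
    {t : ℝ≥0∞} (ht0 : t ≠ 0) (ht : t ≠ ∞) (h : ∫⁻ x in Sᶜ, ‖g x‖ₑ ≤ t / 2) :
    volume {w | t ≤ ‖𝓕 g w‖ₑ} ≤ (t / 2)⁻¹ ^ 2 * ∫⁻ x in S, ‖g x‖ₑ ^ 2 := by
  have half_ne_zero : t / 2 ≠ 0 := (ENNReal.half_pos ht0).ne'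
  have norm_sq : eLpNorm (S.indicator g) 2 volume ^ 2 = ∫⁻ x in S, ‖g x‖ₑ ^ 2 := by
    rw [eLpNorm_indicator_eq_eLpNorm_restrict hS]
    simpa using eLpNorm_nnreal_pow_eq_lintegral (f := g) (p := 2) (μ := volume.restrict S)
      two_ne_zero
  by_cases h2 : eLpNorm (S.indicator g) 2 volume = ∞
  · rw [← norm_sq, h2, ENNReal.top_pow two_ne_zero, ENNReal.mul_top
      (pow_ne_zero _ (ENNReal.inv_ne_zero.2 (ENNReal.div_ne_top ht two_ne_zero)))]
    exact le_top
  have tail (w : E) : ‖𝓕 (Sᶜ.indicator g) w‖ₑ ≤ t / 2 := by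
    refine (enorm_fourier_le_lintegral_enorm _ w).trans ?_
    simpa only [enorm_indicator_eq_indicator_enorm, lintegral_indicator hS.compl] using h
  have subset : {w | t ≤ ‖𝓕 g w‖ₑ} ⊆ {w | t / 2 ≤ ‖𝓕 (S.indicator g) w‖ₑ} := by
    intro w hw
    have hw' : t / 2 + t / 2 ≤ ‖𝓕 (S.indicator g) w‖ₑ + t / 2 := by
      rw [ENNReal.add_halves]
      refine (show t ≤ ‖𝓕 g w‖ₑ from hw).trans ?_
      rw [fourier_indicator_add_indicator_compl hg hS w]
      exact (enorm_add_le _ _).trans (add_le_add_right (tail w) _)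
    exact (ENNReal.add_le_add_iff_right (ENNReal.div_ne_top ht two_ne_zero)).1 hw'
  have hgS : Integrable (S.indicator g) := hg.indicator hS
  refine (measure_mono subset).trans ((meas_ge_le_mul_pow_eLpNorm_enorm volume (p := 2) two_ne_zero
    ENNReal.ofNat_ne_top (continuous_fourier hgS).aestronglyMeasurable half_ne_zero
    fun h_top => absurd h_top (ENNReal.div_ne_top ht two_ne_zero)).trans_eq ?_)
  rw [eLpNorm_fourier_two hgS ⟨hgS.aestronglyMeasurable, lt_top_iff_ne_top.2 h2⟩, ← norm_sq]
  simp

theorem volume_le_norm_fourier_mul_rpow_le (hgm : StronglyMeasurable g) (hg : Integrable g)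
    {r A : ℝ} (hr : 1 < r) (hA : 0 < A)
    (h : ∫⁻ x, ENNReal.ofReal (‖g x‖ ^ r) ≤ ENNReal.ofReal A) (ρ : ℝ) {t : ℝ} (ht : 0 < t) :
    volume {w | t ≤ ‖𝓕 g w‖} * ENNReal.ofReal (t ^ (ρ - 1)) ≤
      ENNReal.ofReal 4 * (ENNReal.ofReal (t ^ (ρ - 3)) *
        ∫⁻ x in {x | t * ‖g x‖ ^ (r - 1) ≤ 2 * A}, ENNReal.ofReal (‖g x‖ ^ 2)) := by
  have hgm' : Measurable fun x => ‖g x‖ := hgm.norm.measurable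
  have hS : MeasurableSet {x | t * ‖g x‖ ^ (r - 1) ≤ 2 * A} :=
    measurableSet_le (by fun_prop) measurable_const
  have half : ENNReal.ofReal t / 2 = ENNReal.ofReal (t / 2) := by
    rw [ENNReal.ofReal_div_of_pos two_pos, ENNReal.ofReal_ofNat]
  have tail : ∫⁻ x in {x | t * ‖g x‖ ^ (r - 1) ≤ 2 * A}ᶜ, ‖g x‖ₑ ≤ ENNReal.ofReal t / 2 := by
    simpa only [ofReal_norm, half] using
      setLIntegral_compl_truncation_le hgm' (fun x => norm_nonneg _) hr hA h ht
  have weak := volume_le_enorm_fourier_le hg hS (ENNReal.ofReal_pos.2 ht).ne' ofReal_ne_top tail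
  simp only [← ofReal_norm, ENNReal.ofReal_le_ofReal_iff (norm_nonneg _), half,
    ← ENNReal.ofReal_pow (norm_nonneg _), ← ENNReal.ofReal_inv_of_pos (half_pos ht),
    ← ENNReal.ofReal_pow (inv_nonneg.2 (half_pos ht).le)] at weak
  have coeff : ENNReal.ofReal ((t / 2)⁻¹ ^ 2) * ENNReal.ofReal (t ^ (ρ - 1)) =
      ENNReal.ofReal 4 * ENNReal.ofReal (t ^ (ρ - 3)) := by
    rw [← ENNReal.ofReal_mul (by positivity), ← ENNReal.ofReal_mul (by positivity),
      show ρ - 1 = ρ - 3 + 2 by ring, Real.rpow_add ht, Real.rpow_two]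
    congr 1
    field_simp
    norm_num
  refine (mul_le_mul_left weak _).trans_eq ?_
  rw [mul_right_comm, coeff, mul_assoc]

theorem lintegral_norm_fourier_rpow_le (hgm : StronglyMeasurable g) (hg : Integrable g)
    {r ρ A : ℝ} (hrρ : r.HolderConjugate ρ) (hρ : 2 < ρ) (hA : 0 < A)
    (hA_eq : ∫⁻ x, ENNReal.ofReal (‖g x‖ ^ r) = ENNReal.ofReal A) :
    ∫⁻ w, ENNReal.ofReal (‖𝓕 g w‖ ^ ρ) ≤
      ENNReal.ofReal (4 * ρ * 2 ^ (ρ - 2) / (ρ - 2) * A ^ (ρ - 1)) := by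
  rw [lintegral_rpow_eq_lintegral_meas_le_mul volume (Eventually.of_forall fun w => norm_nonneg _)
    (continuous_fourier hg).norm.measurable.aemeasurable (by linarith : 0 < ρ)]
  calc _ ≤ ENNReal.ofReal ρ * ∫⁻ t in Ioi 0, ENNReal.ofReal 4 * (ENNReal.ofReal (t ^ (ρ - 3)) *
          ∫⁻ x in {x | t * ‖g x‖ ^ (r - 1) ≤ 2 * A}, ENNReal.ofReal (‖g x‖ ^ 2)) :=
        mul_le_mul_right (setLIntegral_mono' measurableSet_Ioi fun t ht =>
          volume_le_norm_fourier_mul_rpow_le hgm hg hrρ.lt hA hA_eq.le ρ ht) _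
    _ = ENNReal.ofReal ρ * (ENNReal.ofReal 4 *
          (ENNReal.ofReal ((2 * A) ^ (ρ - 2) / (ρ - 2)) * ENNReal.ofReal A)) := by
        rw [lintegral_const_mul' _ _ ofReal_ne_top, lintegral_Ioi_setLIntegral_truncation
          hgm.norm.measurable (fun x => norm_nonneg _) hrρ hρ (by positivity), hA_eq]
    _ = _ := by
        rw [← ENNReal.ofReal_mul (div_nonneg (by positivity) (by linarith)),
          ← ENNReal.ofReal_mul (by norm_num), ← ENNReal.ofReal_mul (by linarith),
          Real.mul_rpow two_pos.le hA.le, show ρ - 1 = ρ - 2 + 1 by ring, Real.rpow_add_one hA.ne']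
        congr 1
        ring

theorem eLpNorm_fourier_le_of_lt_two (hgm : StronglyMeasurable g) (hg : Integrable g) {r ρ : ℝ}
    (hrρ : r.HolderConjugate ρ) (hr : r < 2) :
    eLpNorm (𝓕 g) (ENNReal.ofReal ρ) volume ≤
      ENNReal.ofReal (4 * ρ * 2 ^ (ρ - 2) / (ρ - 2)) ^ (1 / ρ) *
        eLpNorm g (ENNReal.ofReal r) volume := by
  have hρ : 2 < ρ := by nlinarith [hrρ.mul_eq_add, hrρ.symm.lt]
  have hK : 0 < 4 * ρ * 2 ^ (ρ - 2) / (ρ - 2) := div_pos (by positivity) (by linarith)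
  by_cases h0 : eLpNorm g (ENNReal.ofReal r) volume = 0
  · simp [eLpNorm_fourier_eq_zero hg.1 (ENNReal.ofReal_pos.2 hrρ.pos).ne' h0]
  by_cases h_top : eLpNorm g (ENNReal.ofReal r) volume = ∞
  · rw [h_top, ENNReal.mul_top (by positivity)]
    exact le_top
  rw [eLpNorm_ofReal_eq_lintegral _ hrρ.pos] at h0 h_top ⊢
  set J := ∫⁻ x, ENNReal.ofReal (‖g x‖ ^ r)
  have hJ0 : J ≠ 0 := by
    rintro h
    simp [h, hrρ.pos] at h0
  have hJ_top : J ≠ ∞ := by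
    rintro h
    simp [h, hrρ.pos] at h_top
  have exponent : (ρ - 1) * (1 / ρ) = 1 / r := by
    rw [one_div r, ← hrρ.symm.one_sub_inv, sub_mul, mul_one_div_cancel hrρ.symm.ne_zero]
    ring
  calc eLpNorm (𝓕 g) (ENNReal.ofReal ρ) volume
      ≤ ENNReal.ofReal (4 * ρ * 2 ^ (ρ - 2) / (ρ - 2) * J.toReal ^ (ρ - 1)) ^ (1 / ρ) := by
        rw [eLpNorm_ofReal_eq_lintegral _ hrρ.symm.pos]
        exact ENNReal.rpow_le_rpow (lintegral_norm_fourier_rpow_le hgm hg hrρ hρ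
          (ENNReal.toReal_pos hJ0 hJ_top) (ENNReal.ofReal_toReal hJ_top).symm)
          (one_div_nonneg.2 hrρ.symm.nonneg)
    _ = _ := by
        rw [ENNReal.ofReal_mul hK.le, ← ENNReal.ofReal_rpow_of_nonneg toReal_nonneg
          (by linarith), ENNReal.ofReal_toReal hJ_top, ENNReal.mul_rpow_of_nonneg _ _
          (one_div_nonneg.2 hrρ.symm.nonneg), ← ENNReal.rpow_mul, exponent]

theorem exists_eLpNorm_fourier_le (E F : Type*) [NormedAddCommGroup E] [InnerProductSpace ℝ E]
    [FiniteDimensional ℝ E] [MeasurableSpace E] [BorelSpace E] [NormedAddCommGroup F]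
    [InnerProductSpace ℂ F] [CompleteSpace F] (r ρ : ℝ≥0∞) [r.HolderConjugate ρ] (hr : r ≤ 2) :
    ∃ C ≠ ∞, ∀ g : E → F, Integrable g →
      eLpNorm (𝓕 g) ρ volume ≤ C * eLpNorm g r volume := by
  rcases (HolderConjugate.one_le r ρ).eq_or_lt with rfl | hr1
  · obtain rfl : ρ = ∞ := (HolderConjugate.unique 1 ρ ∞)
    refine ⟨1, one_ne_top, fun g _ => ?_⟩
    rw [one_mul, eLpNorm_exponent_top, eLpNorm_one_eq_lintegral_enorm]
    exact essSup_le_of_ae_le _ (Eventually.of_forall (enorm_fourier_le_lintegral_enorm g))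
  rcases hr.eq_or_lt with rfl | hr2
  · obtain rfl : ρ = 2 := HolderConjugate.unique 2 ρ 2
    refine ⟨1, one_ne_top, fun g hg => ?_⟩
    by_cases h_top : eLpNorm g 2 volume = ∞
    · simp [h_top]
    · rw [one_mul, eLpNorm_fourier_two hg ⟨hg.1, lt_top_iff_ne_top.2 h_top⟩]
  have hr_top : r ≠ ∞ := hr2.ne_top
  have hρ_top : ρ ≠ ∞ := (HolderConjugate.ne_top_iff_ne_one ρ r).2 hr1.ne'
  have hrρ : r.toReal.HolderConjugate ρ.toReal := HolderConjugate.toReal_of_ne_top hr_top hρ_top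
  refine ⟨_, ENNReal.rpow_ne_top_of_nonneg (one_div_nonneg.2 hrρ.symm.nonneg)
    (ofReal_ne_top (r := 4 * ρ.toReal * 2 ^ (ρ.toReal - 2) / (ρ.toReal - 2))), fun g hg => ?_⟩
  have hr2' : r.toReal < 2 := by simpa using ENNReal.toReal_strict_mono ENNReal.ofNat_ne_top hr2
  have fourier_mk : 𝓕 (hg.1.mk g) = 𝓕 g := funext fun w => integral_congr_ae <|
    hg.1.ae_eq_mk.mono fun x hx => by simp only [hx]
  simpa only [ENNReal.ofReal_toReal hr_top, ENNReal.ofReal_toReal hρ_top, fourier_mk,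
    eLpNorm_congr_ae hg.1.ae_eq_mk.symm] using eLpNorm_fourier_le_of_lt_two
      hg.1.stronglyMeasurable_mk (hg.congr hg.1.ae_eq_mk) hrρ hr2'

end HausdorffYoung

section FourierChar

open FourierTransform

theorem coe_fourierChar_eq_exp (s : ℝ) : (𝐞 s : ℂ) = Complex.exp (I * (2 * Real.pi * s)) := by
  rw [Real.fourierChar_apply, mul_comm]; push_cast; rfl

theorem coe_fourierChar_add (s t : ℝ) : (𝐞 (s + t) : ℂ) = 𝐞 s * 𝐞 t := by
  rw [AddChar.map_add_eq_mul, Circle.coe_mul]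

theorem enorm_fourierChar (s : ℝ) : ‖(𝐞 s : ℂ)‖ₑ = 1 := by
  rw [← ofReal_norm, Circle.norm_coe, ENNReal.ofReal_one]

@[fun_prop]
theorem continuous_coe_fourierChar {X : Type*} [TopologicalSpace X] {φ : X → ℝ}
    (hφ : Continuous φ) : Continuous fun x => (𝐞 (φ x) : ℂ) := by
  simp only [coe_fourierChar_eq_exp]
  fun_prop

theorem enorm_coe_ofReal {x : ℝ} (hx : 0 ≤ x) : ‖(x : ℂ)‖ₑ = ENNReal.ofReal x := by
  rw [← ofReal_norm, norm_real, Real.norm_of_nonneg hx]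

variable {E : Type*} [NormedAddCommGroup E] [InnerProductSpace ℝ E]
    [FiniteDimensional ℝ E] [MeasurableSpace E] [BorelSpace E]

theorem fourier_eq_integral_mul (g : E → ℂ) (w : E) :
    𝓕 g w = ∫ t, g t * 𝐞 (-inner ℝ t w) := by
  simp only [Real.fourier_eq, Circle.smul_def, smul_eq_mul, mul_comm]

theorem fourierInv_eq_integral_mul (g : E → ℂ) (w : E) :
    𝓕⁻ g w = ∫ t, g t * 𝐞 (inner ℝ t w) := by
  simp only [Real.fourierInv_eq, Circle.smul_def, smul_eq_mul, mul_comm]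

theorem integrable_mul_fourierChar {X : Type*} [TopologicalSpace X] [MeasurableSpace X]
    [OpensMeasurableSpace X] {μ : Measure X} {g : X → ℂ} (hg : Integrable g μ) {φ : X → ℝ}
    (hφ : Continuous φ) : Integrable (fun t => g t * 𝐞 (φ t)) μ :=
  hg.mul_bdd (c := 1) (Continuous.aestronglyMeasurable (by fun_prop))
    (Eventually.of_forall fun _ => (Circle.norm_coe _).le)

/-- The parameter `ε = ±1` lets the same identity serve for `𝓕` and `𝓕⁻`. -/
theorem integral_integral_mul_fourierChar {A k : E → ℂ} (hA : Integrable A) (hk : Integrable k)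
    (ε : ℝ) (w : E) :
    ∫ t, (∫ ξ, A ξ * 𝐞 (ε * inner ℝ ξ t)) * k t * 𝐞 (-(ε * inner ℝ w t))
      = ∫ ξ, A ξ * ∫ t, k t * 𝐞 (-(ε * inner ℝ (w - ξ) t)) := by
  have merge (t : E) : (∫ ξ, A ξ * 𝐞 (ε * inner ℝ ξ t)) * k t * 𝐞 (-(ε * inner ℝ w t))
      = ∫ ξ, A ξ * k t * 𝐞 (-(ε * inner ℝ (w - ξ) t)) := by
    rw [mul_assoc, ← integral_mul_const]
    refine integral_congr_ae (Eventually.of_forall fun ξ => ?_)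
    have : -(ε * inner ℝ (w - ξ) t) = ε * inner ℝ ξ t + -(ε * inner ℝ w t) := by
      rw [inner_sub_left]; ring
    simp only [this, coe_fourierChar_add]
    ring
  have integrable_prod : Integrable (fun z : E × E => k z.1 * A z.2) := hk.mul_prod hA
  simp_rw [merge]
  rw [integral_integral_swap]
  · simp_rw [mul_assoc, integral_const_mul]
  · simp only [mul_comm (A _) (k _)]
    exact integrable_mul_fourierChar integrable_prod (by fun_prop)

end FourierChar

section Gaussian

/-- The Gaussian `exp (-b ‖t‖²)` as an extended nonnegative function, the weight in all the
pointwise estimates of short-time Fourier transforms below. -/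
noncomputable def egaussian {E : Type*} [NormedAddCommGroup E] (b : ℝ) (t : E) : ℝ≥0∞ :=
  ENNReal.ofReal (Real.exp (-b * ‖t‖ ^ 2))

section NormedGroup

variable {E : Type*} [NormedAddCommGroup E]

@[fun_prop]
theorem measurable_egaussian [MeasurableSpace E] [OpensMeasurableSpace E] (b : ℝ) :
    Measurable (egaussian b : E → ℝ≥0∞) := by
  unfold egaussian; fun_prop

theorem egaussian_neg (b : ℝ) (t : E) : egaussian b (-t) = egaussian b t := by
  rw [egaussian, norm_neg, egaussian]

theorem egaussian_le_one {b : ℝ} (hb : 0 ≤ b) (t : E) : egaussian b t ≤ 1 :=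
  ofReal_le_one.2 (Real.exp_le_one_iff.2 (by rw [neg_mul]; exact neg_nonpos.2 (by positivity)))

end NormedGroup

section InnerProduct

open FourierTransform

variable {E : Type*} [NormedAddCommGroup E] [InnerProductSpace ℝ E]
    [FiniteDimensional ℝ E] [MeasurableSpace E] [BorelSpace E] {b : ℝ}

theorem integrable_exp_neg_mul_sq_norm (hb : 0 < b) :
    Integrable fun t : E => Real.exp (-b * ‖t‖ ^ 2) := by
  have h := (GaussianFourier.integrable_cexp_neg_mul_sq_norm_add (V := E) (b := b)
    (by simpa using hb) 0 0).norm
  simpa [Complex.norm_exp, ← Complex.ofReal_pow] using h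

theorem lintegral_egaussian_ne_top (hb : 0 < b) : ∫⁻ t : E, egaussian b t ≠ ∞ :=
  (integrable_exp_neg_mul_sq_norm hb).lintegral_lt_top.ne

theorem eLpNorm_egaussian_ne_top (hb : 0 < b) {p : ℝ≥0∞} (hp : 1 ≤ p) :
    eLpNorm (egaussian b : E → ℝ≥0∞) p volume ≠ ∞ := by
  have hp0 : p ≠ 0 := (one_pos.trans_le hp).ne'
  rcases eq_or_ne p ∞ with rfl | hp_top
  · rw [eLpNorm_top_ennreal_eq_essSup]
    exact ((essSup_le_of_ae_le 1 (Eventually.of_forall (egaussian_le_one hb.le))).trans_lt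
      one_lt_top).ne
  · rw [eLpNorm_ennreal_eq_lintegral hp0 hp_top]
    refine ENNReal.rpow_ne_top_of_nonneg (by positivity)
      (ne_top_of_le_ne_top (lintegral_egaussian_ne_top hb) (lintegral_mono fun t => ?_))
    have hp1 : 1 ≤ p.toReal := by simpa using ENNReal.toReal_mono hp_top hp
    simpa using ENNReal.rpow_le_rpow_of_exponent_ge (egaussian_le_one hb.le t) hp1

theorem integral_exp_neg_mul_sq_norm_sub_mul_fourierChar (hb : 0 < b) (m w : E) :
    ∫ t : E, (Real.exp (-b * ‖t - m‖ ^ 2) : ℂ) * 𝐞 (-inner ℝ w t) =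
      𝐞 (-inner ℝ w m) *
        ((Real.pi / b) ^ (Module.finrank ℝ E / 2 : ℝ) *
          Real.exp (-Real.pi ^ 2 * ‖w‖ ^ 2 / b) : ℝ) := by
  have h := fourier_gaussian_innerProductSpace (V := E) (b := b) (by simpa using hb) w
  have shift (t : E) : (Real.exp (-b * ‖t + m - m‖ ^ 2) : ℂ) * 𝐞 (-inner ℝ w (t + m)) =
      𝐞 (-inner ℝ w m) * (Complex.exp (-b * ‖t‖ ^ 2) * 𝐞 (-inner ℝ t w)) := by
    rw [add_sub_cancel_right, inner_add_right, neg_add, coe_fourierChar_add, real_inner_comm]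
    push_cast; ring
  rw [fourier_eq_integral_mul] at h
  rw [← integral_add_right_eq_self _ m, integral_congr_ae (Eventually.of_forall shift),
    integral_const_mul, h]
  push_cast [ofReal_cpow (show 0 ≤ Real.pi / b by positivity)]
  rfl

end InnerProduct

section Window

open FourierTransform

variable {ι : Type*} [Fintype ι]

theorem gaussWin_eq_ofReal_exp (t : EuclideanSpace ℝ ι) :
    gaussWin t = (Real.exp (-Real.pi * ‖t‖ ^ 2) : ℝ) := by
  rw [gaussWin]; push_cast; ring_nf

theorem conj_gaussWin (t : EuclideanSpace ℝ ι) : (starRingEnd ℂ) (gaussWin t) = gaussWin t := by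
  rw [gaussWin_eq_ofReal_exp, conj_ofReal]

@[fun_prop]
theorem continuous_gaussWin : Continuous (gaussWin (ι := ι)) := by unfold gaussWin; fun_prop

theorem enorm_gaussWin (t : EuclideanSpace ℝ ι) : ‖gaussWin t‖ₑ = egaussian Real.pi t := by
  rw [gaussWin_eq_ofReal_exp, enorm_coe_ofReal (Real.exp_pos _).le, egaussian]

theorem norm_gaussWin_le_one (t : EuclideanSpace ℝ ι) : ‖gaussWin t‖ ≤ 1 := by
  rw [← ENNReal.ofReal_le_one, ofReal_norm, enorm_gaussWin]
  exact egaussian_le_one Real.pi_pos.le t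

theorem integrable_gaussWin : Integrable (gaussWin (ι := ι)) := by
  simp only [funext gaussWin_eq_ofReal_exp]
  exact (integrable_exp_neg_mul_sq_norm Real.pi_pos).ofReal

theorem integrable_gaussWin_sub (x : EuclideanSpace ℝ ι) :
    Integrable fun t => gaussWin (t - x) :=
  integrable_gaussWin.comp_sub_right x

theorem integral_gaussWin_sub_mul_fourierChar (m w : EuclideanSpace ℝ ι) :
    ∫ t, gaussWin (t - m) * 𝐞 (-inner ℝ w t) = 𝐞 (-inner ℝ w m) * gaussWin w := by
  simp_rw [gaussWin_eq_ofReal_exp, integral_exp_neg_mul_sq_norm_sub_mul_fourierChar Real.pi_pos]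
  rw [div_self Real.pi_ne_zero, Real.one_rpow, one_mul,
    show -Real.pi ^ 2 * ‖w‖ ^ 2 / Real.pi = -Real.pi * ‖w‖ ^ 2 by field_simp]

/-- The parallelogram law, centred at the midpoint of `x` and `y`. -/
theorem gaussWin_sub_mul_gaussWin_sub (t x y : EuclideanSpace ℝ ι) :
    gaussWin (t - x) * gaussWin (t - y) =
      (Real.exp (-(Real.pi / 2) * ‖x - y‖ ^ 2) : ℂ) *
        (Real.exp (-(2 * Real.pi) * ‖t - (1 / 2 : ℝ) • (x + y)‖ ^ 2) : ℂ) := by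
  have parallelogram := parallelogram_law_with_norm ℝ (t - x) (t - y)
  have sum_eq : t - x + (t - y) = (2 : ℝ) • (t - (1 / 2 : ℝ) • (x + y)) := by
    module
  have diff_eq : t - x - (t - y) = y - x := by abel
  rw [sum_eq, diff_eq, norm_sub_rev y x, norm_smul, Real.norm_ofNat] at parallelogram
  rw [gaussWin_eq_ofReal_exp, gaussWin_eq_ofReal_exp, ← Complex.ofReal_mul, ← Real.exp_add,
    ← Complex.ofReal_mul, ← Real.exp_add]
  congr 2
  linear_combination (Real.pi / 2) * parallelogram

theorem integral_gaussWin_mul_gaussWin_mul_fourierChar (x y w : EuclideanSpace ℝ ι) :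
    ∫ t, gaussWin (t - x) * gaussWin (t - y) * 𝐞 (-inner ℝ w t) =
      ((1 / 2 : ℝ) ^ (Fintype.card ι / 2 : ℝ) : ℝ) * Real.exp (-(Real.pi / 2) * ‖x - y‖ ^ 2) *
        (Real.exp (-(Real.pi / 2) * ‖w‖ ^ 2)) * 𝐞 (-inner ℝ w ((1 / 2 : ℝ) • (x + y))) := by
  simp_rw [gaussWin_sub_mul_gaussWin_sub, mul_assoc]
  rw [integral_const_mul,
    integral_exp_neg_mul_sq_norm_sub_mul_fourierChar (by positivity), finrank_euclideanSpace,
    show Real.pi / (2 * Real.pi) = 1 / 2 by field_simp,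
    show -Real.pi ^ 2 * ‖w‖ ^ 2 / (2 * Real.pi) = -(Real.pi / 2) * ‖w‖ ^ 2 by field_simp,
    Complex.ofReal_mul]
  ring

end Window

end Gaussian

section ShortTimeFourier

open FourierTransform

variable {ι : Type*} [Fintype ι]

theorem STFT_eq_integral (F : EuclideanSpace ℝ ι → ℂ) (x w : EuclideanSpace ℝ ι) :
    STFT F x w = ∫ t, F t * gaussWin (t - x) * 𝐞 (-inner ℝ w t) := by
  simp only [STFT, conj_gaussWin, coe_fourierChar_eq_exp, ofReal_neg, mul_neg]

theorem fTrans_eq_fourier (f : EuclideanSpace ℝ ι → ℂ) : fTrans f = 𝓕 f := by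
  ext w
  simp only [fTrans, fourier_eq_integral_mul, coe_fourierChar_eq_exp, ofReal_neg, mul_neg]

theorem STFT_eq_fourier (F : EuclideanSpace ℝ ι → ℂ) (x : EuclideanSpace ℝ ι) :
    STFT F x = 𝓕 fun t => F t * gaussWin (t - x) := by
  ext w
  simp only [STFT_eq_integral, fourier_eq_integral_mul, real_inner_comm]

variable (F : 𝓢(EuclideanSpace ℝ ι, ℂ))

theorem fTrans_eq_coe_fourier : fTrans F = (𝓕 F : 𝓢(EuclideanSpace ℝ ι, ℂ)) := by
  rw [fTrans_eq_fourier, SchwartzMap.fourier_coe]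

theorem integrable_fTrans : Integrable (fTrans F) := by
  rw [fTrans_eq_coe_fourier]; exact SchwartzMap.integrable _

theorem continuous_fTrans : Continuous (fTrans F) := by
  rw [fTrans_eq_coe_fourier]; exact SchwartzMap.continuous _

theorem eq_integral_fTrans_mul_fourierChar (t : EuclideanSpace ℝ ι) :
    F t = ∫ ξ, fTrans F ξ * 𝐞 (inner ℝ ξ t) := by
  have h := integrable_fTrans F
  rw [fTrans_eq_fourier] at h
  rw [← fourierInv_eq_integral_mul, fTrans_eq_fourier,
    F.continuous.fourierInv_fourier_eq F.integrable h]

/-- The majorant `|F̂| * G` of `w ↦ V_G F(x, w)`, uniform in `x`. -/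
noncomputable def stftMajorant (F : EuclideanSpace ℝ ι → ℂ) (w : EuclideanSpace ℝ ι) : ℝ≥0∞ :=
  ∫⁻ ξ, ‖fTrans F ξ‖ₑ * egaussian Real.pi (w - ξ)

theorem enorm_STFT_le_stftMajorant (x w : EuclideanSpace ℝ ι) :
    ‖STFT F x w‖ₑ ≤ stftMajorant F w := by
  have h := integral_integral_mul_fourierChar (integrable_fTrans F) (integrable_gaussWin_sub x) 1 w
  simp only [one_mul, ← eq_integral_fTrans_mul_fourierChar] at h
  rw [STFT_eq_integral, h]
  refine (enorm_integral_le_lintegral_enorm _).trans_eq (lintegral_congr fun ξ => ?_)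
  rw [integral_gaussWin_sub_mul_fourierChar, enorm_mul, enorm_mul, enorm_fourierChar, one_mul,
    enorm_gaussWin]

@[fun_prop]
theorem measurable_stftMajorant : Measurable (stftMajorant F) := by
  have := (continuous_fTrans F).measurable
  unfold stftMajorant
  fun_prop

theorem lintegral_stftMajorant_ne_top : ∫⁻ w, stftMajorant F w ≠ ∞ := by
  have := (continuous_fTrans F).measurable
  unfold stftMajorant
  rw [lintegral_lintegral_swap (by fun_prop)]
  have inner (ξ : EuclideanSpace ℝ ι) : ∫⁻ w, ‖fTrans F ξ‖ₑ * egaussian Real.pi (w - ξ) =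
      ‖fTrans F ξ‖ₑ * ∫⁻ w : EuclideanSpace ℝ ι, egaussian Real.pi w := by
    rw [lintegral_const_mul _ (by fun_prop), lintegral_sub_right_eq_self]
  simp_rw [inner]
  rw [lintegral_mul_const _ (by fun_prop)]
  exact mul_ne_top (integrable_fTrans F).hasFiniteIntegral.ne
    (lintegral_egaussian_ne_top Real.pi_pos)

@[fun_prop]
theorem measurable_STFT :
    Measurable fun z : EuclideanSpace ℝ ι × EuclideanSpace ℝ ι => STFT F z.1 z.2 := by
  simp_rw [STFT_eq_integral]
  have := F.continuous
  have continuous_integrand : Continuous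
      (Function.uncurry fun (z : EuclideanSpace ℝ ι × EuclideanSpace ℝ ι) t =>
        F t * gaussWin (t - z.1) * 𝐞 (-inner ℝ z.2 t)) := by
    fun_prop
  exact continuous_integrand.stronglyMeasurable.integral_prod_right.measurable

theorem integrable_STFT (x : EuclideanSpace ℝ ι) : Integrable (STFT F x) :=
  ⟨((measurable_STFT F).comp measurable_prodMk_left).aestronglyMeasurable,
    (lintegral_mono (enorm_STFT_le_stftMajorant F x)).trans_lt
      (lt_top_iff_ne_top.2 (lintegral_stftMajorant_ne_top F))⟩

theorem integrable_mul_gaussWin_sub (x : EuclideanSpace ℝ ι) :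
    Integrable fun t => F t * gaussWin (t - x) :=
  F.integrable.mul_bdd (c := 1) (by fun_prop) (Eventually.of_forall fun _ =>
    norm_gaussWin_le_one _)

theorem mul_gaussWin_sub_eq_integral_STFT (x t : EuclideanSpace ℝ ι) :
    F t * gaussWin (t - x) = ∫ w, STFT F x w * 𝐞 (inner ℝ w t) := by
  have continuous_windowed : Continuous fun t => F t * gaussWin (t - x) := by
    have := F.continuous
    fun_prop
  have h := integrable_STFT F x
  rw [STFT_eq_fourier] at h
  rw [← fourierInv_eq_integral_mul, STFT_eq_fourier,
    continuous_windowed.fourierInv_fourier_eq (integrable_mul_gaussWin_sub F x) h]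

theorem integral_fTrans_mul_gaussWin_mul_fourierChar (y w₀ : EuclideanSpace ℝ ι) :
    ∫ w, fTrans F w * gaussWin (w - w₀) * 𝐞 (inner ℝ y w) = 𝐞 (inner ℝ w₀ y) * STFT F y w₀ := by
  have h := integral_integral_mul_fourierChar F.integrable (integrable_gaussWin_sub w₀) (-1) y
  simp only [neg_mul, one_mul, neg_neg, ← fourier_eq_integral_mul, ← fTrans_eq_fourier] at h
  rw [h, STFT_eq_integral, ← integral_const_mul]
  refine integral_congr_ae (Eventually.of_forall fun ξ => ?_)
  have shift := integral_gaussWin_sub_mul_fourierChar w₀ (ξ - y)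
  rw [← neg_sub y ξ] at shift
  simp only [inner_neg_left, neg_neg] at shift
  simp only [shift]
  rw [inner_sub_left, sub_eq_add_neg, coe_fourierChar_add, neg_sub, real_inner_comm w₀ y,
    real_inner_comm w₀ ξ]
  ring

section Reproducing

theorem integral_gaussWin_sub_sq (t : EuclideanSpace ℝ ι) :
    ∫ z, gaussWin (t - z) * gaussWin (t - z) =
      ((1 / 2 : ℝ) ^ (Fintype.card ι / 2 : ℝ) : ℝ) := by
  have h := integral_gaussWin_mul_gaussWin_mul_fourierChar (0 : EuclideanSpace ℝ ι) 0 0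
  rw [integral_sub_left_eq_self (fun u => gaussWin u * gaussWin u) volume t]
  simpa using h

theorem measurePreserving_prodMk_sub {E : Type*} [NormedAddCommGroup E] [MeasurableSpace E]
    [BorelSpace E] [SecondCountableTopology E] (μ : Measure E) [SFinite μ]
    [μ.IsAddLeftInvariant] [μ.IsNegInvariant] :
    MeasurePreserving (fun z : E × E => (z.1, z.1 - z.2)) (μ.prod μ) (μ.prod μ) :=
  (MeasurePreserving.id μ).skew_product (g := fun a b => a - b) (by fun_prop)
    (Eventually.of_forall fun a => (Measure.measurePreserving_sub_left μ a).map_eq)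

theorem const_mul_STFT_eq_integral_integral (z ζ : EuclideanSpace ℝ ι) :
    ((1 / 2 : ℝ) ^ (Fintype.card ι / 2 : ℝ) : ℝ) * STFT F z ζ =
      ∫ y, ∫ t, F t * gaussWin (t - y) * (gaussWin (t - y) * gaussWin (t - z)) *
        𝐞 (-inner ℝ ζ t) := by
  have := F.continuous
  have expand (t : EuclideanSpace ℝ ι) :
      ((1 / 2 : ℝ) ^ (Fintype.card ι / 2 : ℝ) : ℝ) *
        (F t * gaussWin (t - z) * 𝐞 (-inner ℝ ζ t)) =
      ∫ y, F t * gaussWin (t - y) * (gaussWin (t - y) * gaussWin (t - z)) *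
        𝐞 (-inner ℝ ζ t) := by
    rw [← integral_gaussWin_sub_sq t, ← integral_mul_const]
    exact integral_congr_ae (Eventually.of_forall fun y => by ring)
  have integrable_kernel := (measurePreserving_prodMk_sub volume).integrable_comp_of_integrable
    (F.integrable.mul_prod (integrable_gaussWin (ι := ι)))
  rw [STFT_eq_integral, ← integral_const_mul]
  simp_rw [expand]
  refine integral_integral_swap (integrable_mul_fourierChar (integrable_kernel.mul_bdd (c := 1)
    (Continuous.aestronglyMeasurable (by fun_prop)) (Eventually.of_forall fun q => ?_))
    (by fun_prop))
  rw [norm_mul]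
  exact mul_le_one₀ (norm_gaussWin_le_one _) (norm_nonneg _) (norm_gaussWin_le_one _)

theorem enorm_integral_mul_gaussWin_mul_gaussWin_le (y z ζ : EuclideanSpace ℝ ι) :
    ‖∫ t, F t * gaussWin (t - y) * (gaussWin (t - y) * gaussWin (t - z)) * 𝐞 (-inner ℝ ζ t)‖ₑ ≤
      ENNReal.ofReal ((1 / 2 : ℝ) ^ (Fintype.card ι / 2 : ℝ)) *
        ∫⁻ η, egaussian (Real.pi / 2) (y - z) * egaussian (Real.pi / 2) (ζ - η) *
          ‖STFT F y η‖ₑ := by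
  have integrable_windows : Integrable fun t => gaussWin (t - y) * gaussWin (t - z) :=
    (integrable_gaussWin_sub y).mul_bdd (c := 1) (by fun_prop)
      (Eventually.of_forall fun t => norm_gaussWin_le_one _)
  have h := integral_integral_mul_fourierChar (integrable_STFT F y) integrable_windows 1 ζ
  simp only [one_mul, ← mul_gaussWin_sub_eq_integral_STFT] at h
  rw [h, ← lintegral_const_mul' _ _ ofReal_ne_top]
  refine (enorm_integral_le_lintegral_enorm _).trans_eq (lintegral_congr fun η => ?_)
  rw [integral_gaussWin_mul_gaussWin_mul_fourierChar]
  simp only [enorm_mul, enorm_fourierChar, egaussian]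
  rw [enorm_coe_ofReal (by positivity), enorm_coe_ofReal (Real.exp_pos _).le,
    enorm_coe_ofReal (Real.exp_pos _).le]
  ring

/-- Inverting the transform against `G²`, whose total mass cancels the constant produced by the
Fourier transform of a product of two windows. -/
theorem enorm_STFT_le_lintegral_lintegral (z ζ : EuclideanSpace ℝ ι) :
    ‖STFT F z ζ‖ₑ ≤ ∫⁻ y, ∫⁻ η, egaussian (Real.pi / 2) y * egaussian (Real.pi / 2) η *
      ‖STFT F (y + z) (η + ζ)‖ₑ := by
  set c : ℝ := (1 / 2 : ℝ) ^ (Fintype.card ι / 2 : ℝ) with hc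
  have c_pos : 0 < c := by positivity
  rw [← ENNReal.mul_le_mul_iff_right (ENNReal.ofReal_pos.2 c_pos).ne' ofReal_ne_top]
  calc ENNReal.ofReal c * ‖STFT F z ζ‖ₑ = ‖(c : ℂ) * STFT F z ζ‖ₑ := by
        rw [enorm_mul, enorm_coe_ofReal c_pos.le]
    _ ≤ ∫⁻ y, ENNReal.ofReal c * ∫⁻ η, egaussian (Real.pi / 2) (y - z) *
          egaussian (Real.pi / 2) (ζ - η) * ‖STFT F y η‖ₑ := by
        rw [hc, const_mul_STFT_eq_integral_integral]
        exact (enorm_integral_le_lintegral_enorm _).trans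
          (lintegral_mono fun y => enorm_integral_mul_gaussWin_mul_gaussWin_le F y z ζ)
    _ = _ := by
        rw [lintegral_const_mul' _ _ ofReal_ne_top, ← lintegral_add_right_eq_self _ z]
        congr 1
        refine lintegral_congr fun y => ?_
        rw [← lintegral_add_right_eq_self _ ζ]
        simp only [add_sub_cancel_right, sub_add_cancel_right, egaussian_neg]

end Reproducing

section Embedding

theorem modNorm_eq_eLpNorm {p q : ℝ≥0∞} (hp : p ≠ 0) (hq : q ≠ 0)
    (F : EuclideanSpace ℝ ι → ℂ) :
    modNorm p q F = eLpNorm (fun w => eLpNorm (fun x => ‖STFT F x w‖ₑ) p volume) q volume := by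
  simp only [modNorm, lqNorm_eq_eLpNorm hp, lqNorm_eq_eLpNorm hq, enorm_eq_nnnorm]

theorem exists_one_le_one_add_inv_eq {p p₀ : ℝ≥0∞} (hp : 1 ≤ p) (hpp₀ : p ≤ p₀) :
    ∃ γ : ℝ≥0∞, 1 ≤ γ ∧ 1 + p₀⁻¹ = p⁻¹ + γ⁻¹ := by
  have hp_inv : p⁻¹ ≤ 1 := ENNReal.inv_le_one.2 hp
  refine ⟨(1 - p⁻¹ + p₀⁻¹)⁻¹, ?_, ?_⟩
  · rw [ENNReal.one_le_inv, ← tsub_add_cancel_of_le hp_inv]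
    gcongr
    rw [tsub_add_cancel_of_le hp_inv]
  · rw [inv_inv, ← add_assoc, add_tsub_cancel_of_le hp_inv]

theorem eLpNorm_eLpNorm_le_of_le_lintegral_translate {X : Type*} [AddCommGroup X]
    [MeasurableSpace X] [MeasurableAdd₂ X] {μ : Measure X} [μ.IsAddLeftInvariant] [SigmaFinite μ]
    {p p₀ q γ : ℝ≥0∞} (hp : 1 ≤ p) (hγ : 1 ≤ γ) (h : 1 + p₀⁻¹ = p⁻¹ + γ⁻¹) (hq : 1 ≤ q)
    {V : X × X → ℝ≥0∞} (hV : Measurable V) {W : X → ℝ≥0∞} (hW : Measurable W)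
    (hVW : ∀ z ζ, V (z, ζ) ≤ ∫⁻ y, ∫⁻ η, W y * W η * V (y + z, η + ζ) ∂μ ∂μ) :
    eLpNorm (fun ζ => eLpNorm (fun z => V (z, ζ)) p₀ μ) q μ ≤
      eLpNorm W γ μ * eLpNorm W 1 μ *
        eLpNorm (fun ζ => eLpNorm (fun z => V (z, ζ)) p μ) q μ := by
  let N (ζ : X) : ℝ≥0∞ := eLpNorm (fun z => V (z, ζ)) p μ
  have hN : Measurable N :=
    measurable_eLpNorm_prodMk (f := fun x => V (x.2, x.1)) (by fun_prop)
  have young_space (ζ : X) :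
      eLpNorm (fun z => V (z, ζ)) p₀ μ ≤ eLpNorm W γ μ * ∫⁻ η, N (η + ζ) * W η ∂μ := by
    calc eLpNorm (fun z => V (z, ζ)) p₀ μ
      _ ≤ eLpNorm (fun z => ∫⁻ η, W η * ∫⁻ y, V (y + z, η + ζ) * W y ∂μ ∂μ) p₀ μ := by
          refine eLpNorm_ennreal_mono fun z => (hVW z ζ).trans_eq ?_
          rw [lintegral_lintegral_swap (by fun_prop)]
          refine lintegral_congr fun η => ?_
          rw [← lintegral_const_mul _ (by fun_prop)]
          exact lintegral_congr fun y => by ring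
      _ ≤ ∫⁻ η, eLpNorm (fun z => W η * ∫⁻ y, V (y + z, η + ζ) * W y ∂μ) p₀ μ ∂μ :=
          eLpNorm_lintegral_le (one_le_of_one_add_inv_eq hp hγ h)
            (f := fun x => W x.1 * ∫⁻ y, V (y + x.2, x.1 + ζ) * W y ∂μ) (by fun_prop)
      _ ≤ ∫⁻ η, eLpNorm W γ μ * (N (η + ζ) * W η) ∂μ := by
          refine lintegral_mono fun η => ?_
          rw [eLpNorm_ennreal_const_mul (by fun_prop), mul_comm, ← mul_assoc,
            mul_comm (eLpNorm W γ μ)]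
          gcongr
          exact eLpNorm_lintegral_translate_mul_le hp hγ h (f := fun z => V (z, η + ζ))
            (by fun_prop) hW
      _ = _ := lintegral_const_mul _ (by fun_prop)
  calc _ ≤ eLpNorm (fun ζ => eLpNorm W γ μ * ∫⁻ η, N (η + ζ) * W η ∂μ) q μ :=
        eLpNorm_ennreal_mono young_space
    _ ≤ eLpNorm W γ μ * (eLpNorm N q μ * eLpNorm W 1 μ) := by
        rw [eLpNorm_ennreal_const_mul (by fun_prop)]
        gcongr
        exact eLpNorm_lintegral_translate_mul_le hq le_rfl (by rw [inv_one, add_comm]) hN hW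
    _ = _ := by ring

theorem exists_modNorm_le_of_le (ι : Type*) [Fintype ι] {p p₀ q : ℝ≥0∞} (hp : 1 ≤ p)
    (hpp₀ : p ≤ p₀) (hq : 1 ≤ q) :
    ∃ C ≠ ∞, ∀ F : 𝓢(EuclideanSpace ℝ ι, ℂ), modNorm p₀ q F ≤ C * modNorm p q F := by
  obtain ⟨γ, hγ, hγp⟩ := exists_one_le_one_add_inv_eq hp hpp₀
  have hπ : (0 : ℝ) < Real.pi / 2 := by positivity
  refine ⟨_, mul_ne_top (eLpNorm_egaussian_ne_top (E := EuclideanSpace ℝ ι) hπ hγ)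
    (eLpNorm_egaussian_ne_top (E := EuclideanSpace ℝ ι) hπ le_rfl), fun F => ?_⟩
  rw [modNorm_eq_eLpNorm (one_pos.trans_le (hp.trans hpp₀)).ne' (one_pos.trans_le hq).ne',
    modNorm_eq_eLpNorm (one_pos.trans_le hp).ne' (one_pos.trans_le hq).ne']
  exact eLpNorm_eLpNorm_le_of_le_lintegral_translate hp hγ hγp hq (measurable_STFT F).enorm
    (measurable_egaussian _) (enorm_STFT_le_lintegral_lintegral F)

end Embedding

end ShortTimeFourier

section PhaseSpace

variable {d : ℕ}

local notation "𝔼" => EuclideanSpace ℝ (Fin d)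

theorem inner_pairE (a b c e : 𝔼) :
    inner ℝ (pairE a b) (pairE c e) = inner ℝ a c + inner ℝ b e := by
  simp [pairE, PiLp.inner_apply, Fintype.sum_sum_type]

theorem pairE_sub_pairE (a b c e : 𝔼) : pairE a b - pairE c e = pairE (a - c) (b - e) := by
  ext i
  rcases i with i | i <;> simp [pairE]

theorem gaussWin_pairE (a b : 𝔼) : gaussWin (pairE a b) = gaussWin a * gaussWin b := by
  rw [gaussWin_eq_ofReal_exp, gaussWin_eq_ofReal_exp, gaussWin_eq_ofReal_exp,
    ← Complex.ofReal_mul, ← Real.exp_add]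
  simp only [← real_inner_self_eq_norm_sq, inner_pairE, mul_add]

@[fun_prop]
theorem continuous_pairE : Continuous fun z : 𝔼 × 𝔼 => pairE z.1 z.2 := by
  refine (PiLp.continuous_toLp 2 _).comp (continuous_pi fun i => ?_)
  rcases i with i | i <;> simp only [Sum.elim_inl, Sum.elim_inr] <;> fun_prop

/-- `pairE` as a measurable equivalence, for changing variables. -/
noncomputable def pairEquiv (d : ℕ) : EuclideanSpace ℝ (Fin d) × EuclideanSpace ℝ (Fin d) ≃ᵐ
    EuclideanSpace ℝ (Fin d ⊕ Fin d) :=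
  ((MeasurableEquiv.prodCongr (MeasurableEquiv.toLp 2 (Fin d → ℝ)).symm
    (MeasurableEquiv.toLp 2 (Fin d → ℝ)).symm).trans
    (MeasurableEquiv.sumPiEquivProdPi (fun _ : Fin d ⊕ Fin d => ℝ)).symm).trans
    (MeasurableEquiv.toLp 2 (Fin d ⊕ Fin d → ℝ))

theorem coe_pairEquiv : ⇑(pairEquiv d) = fun z : 𝔼 × 𝔼 => pairE z.1 z.2 := by
  ext z i
  rcases i with i | i <;> rfl

theorem measurableEmbedding_pairE : MeasurableEmbedding fun z : 𝔼 × 𝔼 => pairE z.1 z.2 := by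
  rw [← coe_pairEquiv]
  exact (pairEquiv d).measurableEmbedding

theorem measurePreserving_pairE : MeasurePreserving fun z : 𝔼 × 𝔼 => pairE z.1 z.2 := by
  rw [← coe_pairEquiv]
  exact (((PiLp.volume_preserving_ofLp _).prod (PiLp.volume_preserving_ofLp _)).trans
    (volume_measurePreserving_sumPiEquivProdPi _).symm).trans (PiLp.volume_preserving_toLp _)

theorem modNorm_eq_eLpNorm_pairE {p q : ℝ≥0∞} (hp : p ≠ 0) (hq : q ≠ 0)
    (a : EuclideanSpace ℝ (Fin d ⊕ Fin d) → ℂ) :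
    modNorm p q a = eLpNorm (fun ζ : 𝔼 × 𝔼 => eLpNorm (fun z : 𝔼 × 𝔼 =>
      ‖STFT a (pairE z.1 z.2) (pairE ζ.1 ζ.2)‖ₑ) p volume) q volume := by
  have h (p : ℝ≥0∞) (g : EuclideanSpace ℝ (Fin d ⊕ Fin d) → ℝ≥0∞) :
      eLpNorm g p volume = eLpNorm (fun z : 𝔼 × 𝔼 => g (pairE z.1 z.2)) p volume := by
    rw [← measurePreserving_pairE.map_eq, measurableEmbedding_pairE.eLpNorm_map_measure]
    rfl
  simp only [modNorm_eq_eLpNorm hp hq, h]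

end PhaseSpace

section KohnNirenberg

open FourierTransform

variable {d : ℕ}

local notation "𝔼" => EuclideanSpace ℝ (Fin d)

theorem KNop_eq_integral (a : EuclideanSpace ℝ (Fin d ⊕ Fin d) → ℂ) (f : 𝔼 → ℂ) (t : 𝔼) :
    KNop a f t = ∫ w, a (pairE t w) * fTrans f w * 𝐞 (inner ℝ t w) := by
  simp only [KNop, coe_fourierChar_eq_exp]

/-- The integrand of the expansion of `a(x,D)f` near `x` into time-frequency atoms: `w` is a
frequency of `f`, and `(ξ, y)` the dual variable at which the symbol is analysed around `(x, w)`. -/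
noncomputable def knIntegrand (a : EuclideanSpace ℝ (Fin d ⊕ Fin d) → ℂ) (f : 𝔼 → ℂ)
    (x w ξ y : 𝔼) : ℂ :=
  STFT a (pairE x w) (pairE ξ y) * STFT f (x + y) w * 𝐞 (inner ℝ w y)

/-- The Fourier transform of `a(x,D)f` localised around `x` by `knWindow`. -/
noncomputable def knSpectrum (a : EuclideanSpace ℝ (Fin d ⊕ Fin d) → ℂ) (f : 𝔼 → ℂ)
    (x η : 𝔼) : ℂ :=
  ∫ w, ∫ y, knIntegrand a f x w (η - w) y

/-- The localising window: `G(u)` times the Fourier transform of `G²` at `u`. -/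
noncomputable def knWindow (u : 𝔼) : ℝ :=
  (1 / 2 : ℝ) ^ (d / 2 : ℝ) * Real.exp (-(3 * Real.pi / 2) * ‖u‖ ^ 2)

theorem gaussWin_mul_integral_gaussWin_sq_mul_fourierChar (u : 𝔼) :
    gaussWin u * ∫ v, gaussWin v * gaussWin v * 𝐞 (-inner ℝ u v) = knWindow u := by
  have h := integral_gaussWin_mul_gaussWin_mul_fourierChar (0 : 𝔼) 0 u
  simp only [sub_zero, add_zero, smul_zero, inner_zero_right, neg_zero, norm_zero,
    Fintype.card_fin, AddChar.map_zero_eq_one, Circle.coe_one, mul_one, ne_eq, OfNat.ofNat_ne_zero,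
    not_false_eq_true, zero_pow, mul_zero, Real.exp_zero, Complex.ofReal_one] at h
  rw [h, gaussWin_eq_ofReal_exp, knWindow,
    show -(3 * Real.pi / 2) * ‖u‖ ^ 2 = -Real.pi * ‖u‖ ^ 2 + -(Real.pi / 2) * ‖u‖ ^ 2 by ring,
    Real.exp_add]
  push_cast
  ring

variable (a : 𝓢(EuclideanSpace ℝ (Fin d ⊕ Fin d), ℂ)) (f : 𝓢(EuclideanSpace ℝ (Fin d), ℂ))

theorem mul_gaussWin_mul_gaussWin_eq_integral (x w₀ t w : 𝔼) :
    a (pairE t w) * (gaussWin (t - x) * gaussWin (w - w₀)) =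
      ∫ ζ : 𝔼 × 𝔼, STFT a (pairE x w₀) (pairE ζ.1 ζ.2) *
        𝐞 (inner ℝ ζ.1 t + inner ℝ ζ.2 w) := by
  rw [← gaussWin_pairE, ← pairE_sub_pairE, mul_gaussWin_sub_eq_integral_STFT,
    ← measurePreserving_pairE.integral_comp measurableEmbedding_pairE]
  simp only [inner_pairE]

theorem integrable_STFT_pairE (x w₀ : 𝔼) :
    Integrable fun ζ : 𝔼 × 𝔼 => STFT a (pairE x w₀) (pairE ζ.1 ζ.2) :=
  measurePreserving_pairE.integrable_comp_of_integrable (integrable_STFT a (pairE x w₀))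

theorem knIntegrand_mul_fourierChar_eq_integral (x w₀ t ξ y : 𝔼) :
    knIntegrand a f x w₀ ξ y * 𝐞 (inner ℝ (w₀ + ξ) t) =
      ∫ w, fTrans f w * gaussWin (w - w₀) * STFT a (pairE x w₀) (pairE ξ y) *
        𝐞 (inner ℝ ξ t + inner ℝ y w + (inner ℝ (t - x) w₀ + inner ℝ x w)) := by
  have expand := integral_fTrans_mul_gaussWin_mul_fourierChar f (x + y) w₀
  have phase : inner ℝ w₀ y + inner ℝ (w₀ + ξ) t =
      inner ℝ w₀ (x + y) + (inner ℝ ξ t + inner ℝ (t - x) w₀) := by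
    rw [inner_sub_left, inner_add_left, inner_add_right, real_inner_comm t, real_inner_comm x]
    ring
  calc knIntegrand a f x w₀ ξ y * 𝐞 (inner ℝ (w₀ + ξ) t)
    _ = 𝐞 (inner ℝ w₀ (x + y)) * STFT f (x + y) w₀ * (STFT a (pairE x w₀) (pairE ξ y) *
          𝐞 (inner ℝ ξ t + inner ℝ (t - x) w₀)) := by
        rw [knIntegrand, mul_assoc, ← coe_fourierChar_add, phase, coe_fourierChar_add]
        ring
    _ = _ := by
        rw [← expand, ← integral_mul_const]
        refine integral_congr_ae (Eventually.of_forall fun w => ?_)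
        simp only [inner_add_left, coe_fourierChar_add]
        ring

theorem integral_knIntegrand_mul_fourierChar (x w₀ t : 𝔼) :
    ∫ ζ : 𝔼 × 𝔼, knIntegrand a f x w₀ ζ.1 ζ.2 * 𝐞 (inner ℝ (w₀ + ζ.1) t) =
      ∫ w, gaussWin (t - x) * (a (pairE t w) * fTrans f w * 𝐞 (inner ℝ t w)) *
        (gaussWin (w - w₀) * gaussWin (w - w₀) * 𝐞 (-inner ℝ (t - x) (w - w₀))) := by
  simp_rw [knIntegrand_mul_fourierChar_eq_integral]
  rw [integral_integral_swap]
  · refine integral_congr_ae (Eventually.of_forall fun w => ?_)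
    have phase : inner ℝ (t - x) w₀ + inner ℝ x w =
        inner ℝ t w + -inner ℝ (t - x) (w - w₀) := by
      simp only [inner_sub_left, inner_sub_right]; ring
    have invert := mul_gaussWin_mul_gaussWin_eq_integral a x w₀ t w
    calc ∫ ζ : 𝔼 × 𝔼, fTrans f w * gaussWin (w - w₀) * STFT a (pairE x w₀) (pairE ζ.1 ζ.2) *
          𝐞 (inner ℝ ζ.1 t + inner ℝ ζ.2 w + (inner ℝ (t - x) w₀ + inner ℝ x w))
      _ = (∫ ζ : 𝔼 × 𝔼, STFT a (pairE x w₀) (pairE ζ.1 ζ.2) *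
            𝐞 (inner ℝ ζ.1 t + inner ℝ ζ.2 w)) *
          (fTrans f w * gaussWin (w - w₀) * 𝐞 (inner ℝ (t - x) w₀ + inner ℝ x w)) := by
        rw [← integral_mul_const]
        refine integral_congr_ae (Eventually.of_forall fun ζ => ?_)
        simp only [coe_fourierChar_add]
        ring
      _ = _ := by
        rw [← invert, phase, coe_fourierChar_add]
        ring
  · refine integrable_mul_fourierChar (φ := fun z : (𝔼 × 𝔼) × 𝔼 => inner ℝ z.1.1 t +
      inner ℝ z.1.2 z.2 + (inner ℝ (t - x) w₀ + inner ℝ x z.2)) ?_ (by fun_prop)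
    have windowed : Integrable fun w => fTrans f w * gaussWin (w - w₀) :=
      (integrable_fTrans f).mul_bdd (c := 1) (by fun_prop)
        (Eventually.of_forall fun w => norm_gaussWin_le_one _)
    exact ((integrable_STFT_pairE a x w₀).mul_prod windowed).congr
      (Eventually.of_forall fun z => mul_comm _ _)

theorem integrable_symbol_mul_fTrans (t : 𝔼) :
    Integrable fun w => a (pairE t w) * fTrans f w * 𝐞 (inner ℝ t w) := by
  obtain ⟨C, hC⟩ := a.decay 0 0
  refine integrable_mul_fourierChar ((integrable_fTrans f).bdd_mul (c := C)
    (Continuous.aestronglyMeasurable ?_) (Eventually.of_forall fun w => ?_)) (by fun_prop)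
  · exact a.continuous.comp (continuous_pairE.comp (Continuous.prodMk_right t))
  · simpa using hC.2 (pairE t w)

theorem integral_integral_eq_knWindow_mul_KNop (x t : 𝔼) :
    ∫ w₀, ∫ w, gaussWin (t - x) * (a (pairE t w) * fTrans f w * 𝐞 (inner ℝ t w)) *
        (gaussWin (w - w₀) * gaussWin (w - w₀) * 𝐞 (-inner ℝ (t - x) (w - w₀))) =
      knWindow (t - x) * KNop a f t := by
  have kernel : Integrable fun v : 𝔼 => gaussWin v * gaussWin v * 𝐞 (-inner ℝ (t - x) v) :=
    integrable_mul_fourierChar (integrable_gaussWin.mul_bdd (c := 1) (by fun_prop)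
      (Eventually.of_forall norm_gaussWin_le_one)) (by fun_prop)
  rw [integral_integral_swap]
  · simp_rw [integral_const_mul]
    simp_rw [integral_sub_left_eq_self
      (fun v : 𝔼 => gaussWin v * gaussWin v * (𝐞 (-inner ℝ (t - x) v) : ℂ))]
    rw [integral_mul_const, integral_const_mul, ← KNop_eq_integral,
      ← gaussWin_mul_integral_gaussWin_sq_mul_fourierChar]
    ring
  · exact ((measurePreserving_prodMk_sub volume).comp
      Measure.measurePreserving_swap).integrable_comp_of_integrable
      (((integrable_symbol_mul_fTrans a f t).const_mul (gaussWin (t - x))).mul_prod kernel)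

theorem enorm_knIntegrand (x w ξ y : 𝔼) :
    ‖knIntegrand a f x w ξ y‖ₑ = ‖STFT a (pairE x w) (pairE ξ y)‖ₑ * ‖STFT f (x + y) w‖ₑ := by
  rw [knIntegrand, enorm_mul, enorm_fourierChar, mul_one, enorm_mul]

theorem integrable_knIntegrand (x : 𝔼) :
    Integrable fun z : 𝔼 × (𝔼 × 𝔼) => knIntegrand a f x z.1 z.2.1 z.2.2 := by
  refine ⟨Measurable.aestronglyMeasurable (by unfold knIntegrand; fun_prop), ?_⟩
  calc ∫⁻ z : 𝔼 × (𝔼 × 𝔼), ‖knIntegrand a f x z.1 z.2.1 z.2.2‖ₑ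
    _ ≤ ∫⁻ z : 𝔼 × (𝔼 × 𝔼), stftMajorant f z.1 * stftMajorant a (pairE z.2.1 z.2.2) := by
        refine lintegral_mono fun z => ?_
        rw [enorm_knIntegrand, mul_comm]
        exact mul_le_mul' (enorm_STFT_le_stftMajorant f _ _) (enorm_STFT_le_stftMajorant a _ _)
    _ = (∫⁻ w, stftMajorant f w) * ∫⁻ ζ, stftMajorant a ζ := by
        rw [← measurePreserving_pairE.lintegral_comp (measurable_stftMajorant a)]
        exact lintegral_prod_mul (measurable_stftMajorant f).aemeasurable
          ((measurable_stftMajorant a).comp continuous_pairE.measurable).aemeasurable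
    _ < ∞ := ENNReal.mul_lt_top (lintegral_stftMajorant_ne_top f).lt_top
        (lintegral_stftMajorant_ne_top a).lt_top

theorem integrable_integral_knIntegrand (x : 𝔼) :
    Integrable fun z : 𝔼 × 𝔼 => ∫ y, knIntegrand a f x z.1 z.2 y :=
  ((measurePreserving_prodAssoc volume volume volume).integrable_comp_of_integrable
    (integrable_knIntegrand a f x)).integral_prod_left

theorem integrable_knSpectrum (x : 𝔼) : Integrable (knSpectrum a f x) :=
  ((measurePreserving_prod_sub_swap volume volume).integrable_comp_of_integrable
    (integrable_integral_knIntegrand a f x)).integral_prod_left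

theorem integral_integral_shear {Ψ : 𝔼 × 𝔼 → ℂ} (hΨ : Integrable Ψ) :
    ∫ η, ∫ w, Ψ (w, η - w) = ∫ w, ∫ ξ, Ψ (w, ξ) := by
  rw [integral_integral_swap (f := fun η w => Ψ (w, η - w))
    ((measurePreserving_prod_sub_swap volume volume).integrable_comp_of_integrable hΨ)]
  refine integral_congr_ae (Eventually.of_forall fun w => ?_)
  exact integral_sub_right_eq_self (fun ξ => Ψ (w, ξ)) w

theorem knWindow_mul_KNop_eq_fourierInv (x t : 𝔼) :
    knWindow (t - x) * KNop a f t = 𝓕⁻ (knSpectrum a f x) t := by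
  have integrable_modulated : Integrable fun z : 𝔼 × 𝔼 =>
      (∫ y, knIntegrand a f x z.1 z.2 y) * 𝐞 (inner ℝ (z.1 + z.2) t) :=
    integrable_mul_fourierChar (integrable_integral_knIntegrand a f x) (by fun_prop)
  have integrable_section : ∀ᵐ w, Integrable fun ζ : 𝔼 × 𝔼 =>
      knIntegrand a f x w ζ.1 ζ.2 * 𝐞 (inner ℝ (w + ζ.1) t) :=
    (integrable_mul_fourierChar (φ := fun z : 𝔼 × (𝔼 × 𝔼) => inner ℝ (z.1 + z.2.1) t)
      (integrable_knIntegrand a f x) (by fun_prop)).prod_right_ae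
  calc (knWindow (t - x) : ℂ) * KNop a f t
    _ = ∫ w, ∫ ζ : 𝔼 × 𝔼, knIntegrand a f x w ζ.1 ζ.2 * 𝐞 (inner ℝ (w + ζ.1) t) := by
        simp_rw [integral_knIntegrand_mul_fourierChar, integral_integral_eq_knWindow_mul_KNop]
    _ = ∫ w, ∫ ξ, (∫ y, knIntegrand a f x w ξ y) * 𝐞 (inner ℝ (w + ξ) t) := by
        refine integral_congr_ae ?_
        filter_upwards [integrable_section] with w hw
        rw [Measure.volume_eq_prod] at hw ⊢
        simp_rw [integral_prod _ hw, integral_mul_const]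
    _ = ∫ η, ∫ w, (∫ y, knIntegrand a f x w (η - w) y) * 𝐞 (inner ℝ (w + (η - w)) t) :=
        (integral_integral_shear integrable_modulated).symm
    _ = 𝓕⁻ (knSpectrum a f x) t := by
        simp only [add_sub_cancel, integral_mul_const, fourierInv_eq_integral_mul, knSpectrum]

/-- The bound for `‖knSpectrum a f x η‖ₑ` obtained by taking absolute values under the integral;
it has the shape of the trilinear estimate `eLpNorm_eLpNorm_twisted_le`. -/
noncomputable def knMajorant (a : EuclideanSpace ℝ (Fin d ⊕ Fin d) → ℂ) (f : 𝔼 → ℂ)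
    (x η : 𝔼) : ℝ≥0∞ :=
  ∫⁻ w, ∫⁻ y, ‖STFT a (pairE x w) (pairE (η - w) y)‖ₑ * ‖STFT f (x + y) w‖ₑ

theorem enorm_knSpectrum_le_knMajorant (x η : 𝔼) :
    ‖knSpectrum a f x η‖ₑ ≤ knMajorant a f x η := by
  refine (enorm_integral_le_lintegral_enorm _).trans (lintegral_mono fun w => ?_)
  refine (enorm_integral_le_lintegral_enorm _).trans_eq (lintegral_congr fun y => ?_)
  exact enorm_knIntegrand a f x w (η - w) y

theorem measurable_knMajorant : Measurable fun z : 𝔼 × 𝔼 => knMajorant a f z.1 z.2 := by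
  have : Measurable fun u : ((𝔼 × 𝔼) × 𝔼) × 𝔼 =>
      ‖STFT a (pairE u.1.1.1 u.1.2) (pairE (u.1.1.2 - u.1.2) u.2)‖ₑ *
        ‖STFT f (u.1.1.1 + u.2) u.1.2‖ₑ := by fun_prop
  exact this.lintegral_prod_right'.lintegral_prod_right'

end KohnNirenberg

section Amalgam

variable {d : ℕ}

local notation "𝔼" => EuclideanSpace ℝ (Fin d)

theorem eLpNorm_count_le_of_le {X : Type*} [MeasurableSpace X] [MeasurableSingletonClass X]
    {p q : ℝ≥0∞} (hp : p ≠ 0) (hpq : p ≤ q) (A : X → ℝ≥0∞) :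
    eLpNorm A q Measure.count ≤ eLpNorm A p Measure.count := by
  set M := eLpNorm A p Measure.count
  have A_le (i : X) : A i ≤ M := enorm_le_eLpNorm_count A i hp
  rcases eq_or_ne q ∞ with rfl | hq
  · rw [eLpNorm_top_ennreal_eq_essSup, essSup_count]
    exact iSup_le A_le
  have hp_top : p ≠ ∞ := ne_top_of_le_ne_top hq hpq
  have p_pos : 0 < p.toReal := toReal_pos hp hp_top
  have p_le : p.toReal ≤ q.toReal := toReal_mono hq hpq
  rw [eLpNorm_ennreal_eq_lintegral (hp.bot_lt.trans_le hpq).ne' hq, one_div,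
    ENNReal.rpow_inv_le_iff (p_pos.trans_le p_le)]
  have split (x : ℝ≥0∞) : x ^ q.toReal = x ^ p.toReal * x ^ (q.toReal - p.toReal) := by
    rw [← ENNReal.rpow_add_of_nonneg _ _ p_pos.le (sub_nonneg.2 p_le), add_sub_cancel]
  have M_rpow : M ^ p.toReal = ∫⁻ i, A i ^ p.toReal ∂Measure.count := by
    rw [show M = _ from eLpNorm_ennreal_eq_lintegral hp hp_top A, ← ENNReal.rpow_mul,
      one_div_mul_cancel p_pos.ne', ENNReal.rpow_one]
  calc ∫⁻ i, A i ^ q.toReal ∂Measure.count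
    _ ≤ ∫⁻ i, A i ^ p.toReal * M ^ (q.toReal - p.toReal) ∂Measure.count := by
        refine lintegral_mono fun i => ?_
        rw [split]
        exact mul_le_mul_right (ENNReal.rpow_le_rpow (A_le i) (sub_nonneg.2 p_le)) _
    _ = (∫⁻ i, A i ^ p.toReal ∂Measure.count) * M ^ (q.toReal - p.toReal) := by
        simp only [lintegral_count, ENNReal.tsum_mul_right]
    _ = M ^ q.toReal := by
        rw [split, M_rpow]

/-- The point of `ℝ^d` with integer coordinates `n`. -/
def intPoint (n : Fin d → ℤ) : 𝔼 := WithLp.toLp 2 fun i => (n i : ℝ)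

theorem intPoint_sub (n m : Fin d → ℤ) : intPoint (n - m) = intPoint n - intPoint m := by
  ext i; simp [intPoint]

/-- The coordinatewise integer part, which labels the translate of the unit cube containing a
point. -/
noncomputable def floorPoint (x : 𝔼) : Fin d → ℤ := fun i => ⌊x i⌋

theorem floorPoint_add_intPoint_eq_iff {x : 𝔼} {n : Fin d → ℤ} :
    floorPoint (x + intPoint n) = n ↔ x ∈ unitCube d := by
  simp [funext_iff, floorPoint, intPoint, unitCube, Int.floor_eq_zero_iff]

theorem sub_intPoint_floorPoint_mem_unitCube (x : 𝔼) :
    x - intPoint (floorPoint x) ∈ unitCube d := by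
  rw [← floorPoint_add_intPoint_eq_iff (n := floorPoint x), sub_add_cancel]

@[fun_prop]
theorem measurable_floorPoint : Measurable (floorPoint : 𝔼 → Fin d → ℤ) :=
  measurable_pi_lambda _ fun i => Int.measurable_floor.comp (by fun_prop)

theorem unitCube_eq_preimage_pi :
    unitCube d = WithLp.ofLp ⁻¹' (univ.pi fun _ : Fin d => Ico (0 : ℝ) 1) := by
  ext x; simp [unitCube]

theorem measurableSet_unitCube : MeasurableSet (unitCube d) := by
  rw [unitCube_eq_preimage_pi]
  exact (PiLp.volume_preserving_ofLp (Fin d)).measurable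
    (MeasurableSet.univ_pi fun _ => measurableSet_Ico)

theorem volume_unitCube : volume (unitCube d) = 1 := by
  rw [unitCube_eq_preimage_pi, (PiLp.volume_preserving_ofLp (Fin d)).measure_preimage
    (MeasurableSet.univ_pi fun _ => measurableSet_Ico).nullMeasurableSet, Real.volume_pi_Ico]
  simp

instance isProbabilityMeasure_restrict_unitCube :
    IsProbabilityMeasure ((volume : Measure 𝔼).restrict (unitCube d)) :=
  ⟨by rw [Measure.restrict_apply_univ, volume_unitCube]⟩

theorem norm_sub_sq_le_of_mem_unitCube {x y : 𝔼} (hx : x ∈ unitCube d) (hy : y ∈ unitCube d) :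
    ‖x - y‖ ^ 2 ≤ d := by
  rw [EuclideanSpace.norm_sq_eq]
  calc ∑ i, ‖(x - y) i‖ ^ 2 ≤ ∑ _i : Fin d, (1 : ℝ) := by
        refine Finset.sum_le_sum fun i _ => ?_
        have hxi := hx i
        have hyi := hy i
        rw [mem_Ico] at hxi hyi
        rw [sq_le_one_iff₀ (norm_nonneg _), Real.norm_eq_abs, PiLp.sub_apply, abs_le]
        constructor <;> linarith
    _ = d := by simp

theorem measurePreserving_floorPoint :
    MeasurePreserving (floorPoint : 𝔼 → Fin d → ℤ) volume Measure.count := by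
  refine ⟨measurable_floorPoint, Measure.ext_of_singleton fun n => ?_⟩
  have cell : (· + intPoint n) ⁻¹' (floorPoint ⁻¹' {n}) = unitCube d :=
    Set.ext fun x => floorPoint_add_intPoint_eq_iff
  rw [Measure.map_apply measurable_floorPoint (measurableSet_singleton n),
    ← measure_preimage_add_right volume (intPoint n), cell, volume_unitCube,
    Measure.count_singleton]

theorem lintegral_eq_tsum_setLIntegral_unitCube (g : 𝔼 → ℝ≥0∞) :
    ∫⁻ x, g x = ∑' n : Fin d → ℤ, ∫⁻ x in unitCube d, g (x + intPoint n) := by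
  have measurableSet_cell (n : Fin d → ℤ) : MeasurableSet (floorPoint ⁻¹' {n} : Set 𝔼) :=
    measurable_floorPoint (measurableSet_singleton n)
  have cells_disjoint : Pairwise (Function.onFun Disjoint fun n : Fin d → ℤ =>
      (floorPoint ⁻¹' {n} : Set 𝔼)) := fun m n hmn => Disjoint.preimage _ (by simpa using hmn)
  have cells_cover : ⋃ n : Fin d → ℤ, (floorPoint ⁻¹' {n} : Set 𝔼) = univ := by
    ext x; simp
  rw [← setLIntegral_univ, ← cells_cover, lintegral_iUnion measurableSet_cell cells_disjoint]
  refine tsum_congr fun n => ?_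
  rw [← lintegral_indicator (measurableSet_cell n), ← lintegral_indicator measurableSet_unitCube,
    ← lintegral_add_right_eq_self _ (intPoint n)]
  classical
  refine lintegral_congr fun x => ?_
  simp only [indicator]
  exact if_congr floorPoint_add_intPoint_eq_iff rfl rfl

theorem eLpNorm_eq_eLpNorm_count_unitCube {p : ℝ≥0∞} (hp : p ≠ 0) (hp_top : p ≠ ∞)
    (g : 𝔼 → ℝ≥0∞) :
    eLpNorm g p volume = eLpNorm (fun n : Fin d → ℤ =>
      eLpNorm (fun x => g (x + intPoint n)) p (volume.restrict (unitCube d))) p Measure.count := by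
  simp only [eLpNorm_ennreal_eq_lintegral hp hp_top, ← ENNReal.rpow_mul,
    one_div_mul_cancel (toReal_pos hp hp_top).ne', ENNReal.rpow_one, lintegral_count]
  rw [lintegral_eq_tsum_setLIntegral_unitCube]

theorem eLpNorm_count_setLIntegral_unitCube_le {e s : ℝ≥0∞} (he : 1 ≤ e) (hes : e ≤ s)
    {N : 𝔼 → ℝ≥0∞} (hN : Measurable N) :
    eLpNorm (fun n : Fin d → ℤ => ∫⁻ x in unitCube d, N (x + intPoint n)) s Measure.count ≤
      eLpNorm N e volume := by
  have he₀ : e ≠ 0 := (one_pos.trans_le he).ne'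
  have local_le (n : Fin d → ℤ) : ∫⁻ x in unitCube d, N (x + intPoint n) ≤
      eLpNorm (fun x => N (x + intPoint n)) e (volume.restrict (unitCube d)) := by
    rw [← eLpNorm_one_ennreal_eq_lintegral]
    exact eLpNorm_le_eLpNorm_of_exponent_le he (Measurable.aestronglyMeasurable (by fun_prop))
  refine (eLpNorm_count_le_of_le he₀ hes _).trans ?_
  rcases eq_or_ne e ∞ with rfl | he_top
  · rw [eLpNorm_top_ennreal_eq_essSup, essSup_count]
    refine iSup_le fun n => (local_le n).trans ?_
    rw [← eLpNorm_translate hN ∞ (intPoint n)]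
    exact eLpNorm_mono_measure _ Measure.restrict_le_self
  · rw [eLpNorm_eq_eLpNorm_count_unitCube he₀ he_top]
    exact eLpNorm_ennreal_mono local_le

theorem wNorm_eq_eLpNorm {r s : ℝ≥0∞} (hr : r ≠ 0) (hs : s ≠ 0) (f : 𝔼 → ℂ) :
    wNorm d r s f = eLpNorm (fun n : Fin d → ℤ =>
      eLpNorm (fun x => f (x + intPoint n)) r (volume.restrict (unitCube d))) s Measure.count := by
  simp only [wNorm, lqNorm_eq_eLpNorm hr, lqNorm_eq_eLpNorm hs]
  rfl

end Amalgam

section Localization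

open FourierTransform

variable {d : ℕ}

local notation "𝔼" => EuclideanSpace ℝ (Fin d)

theorem exists_enorm_le_mul_enorm_knWindow_mul (d : ℕ) :
    ∃ K : ℝ≥0∞, K ≠ ∞ ∧ ∀ x ∈ unitCube d, ∀ y ∈ unitCube d, ∀ z : ℂ,
      ‖z‖ₑ ≤ K * ‖knWindow (x - y) * z‖ₑ := by
  set c : ℝ := (1 / 2 : ℝ) ^ (d / 2 : ℝ) * Real.exp (-(3 * Real.pi / 2) * d)
  have c_pos : 0 < c := by positivity
  refine ⟨ENNReal.ofReal c⁻¹, ofReal_ne_top, fun x hx y hy z => ?_⟩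
  have c_le : c ≤ knWindow (x - y) := by
    have := norm_sub_sq_le_of_mem_unitCube hx hy
    have := Real.pi_pos
    exact mul_le_mul_of_nonneg_left (Real.exp_le_exp.2 (by nlinarith)) (by positivity)
  calc ‖z‖ₑ ≤ ENNReal.ofReal (c⁻¹ * knWindow (x - y)) * ‖z‖ₑ := by
        refine le_mul_of_one_le_left' (ENNReal.one_le_ofReal.2 ?_)
        rwa [inv_mul_eq_div, one_le_div c_pos]
    _ = ENNReal.ofReal c⁻¹ * ‖knWindow (x - y) * z‖ₑ := by
        rw [ENNReal.ofReal_mul (by positivity), enorm_mul,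
          enorm_coe_ofReal (c_pos.le.trans c_le), mul_assoc]

theorem eLpNorm_fourierInv {g : 𝔼 → ℂ} (hg : Integrable g) (p : ℝ≥0∞) :
    eLpNorm (𝓕⁻ g) p volume = eLpNorm (𝓕 g) p volume := by
  simp only [funext (Real.fourierInv_eq_fourier_neg g)]
  exact eLpNorm_comp_measurePreserving (continuous_fourier hg).aestronglyMeasurable
    (Measure.measurePreserving_neg volume)

theorem measurable_KNop (a : 𝓢(EuclideanSpace ℝ (Fin d ⊕ Fin d), ℂ)) (f : 𝓢(𝔼, ℂ)) :
    Measurable (KNop a f) := by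
  have := a.continuous
  have := continuous_fTrans f
  have integrand : Continuous fun z : 𝔼 × 𝔼 =>
      a (pairE z.1 z.2) * fTrans f z.2 * 𝐞 (inner ℝ z.1 z.2) := by fun_prop
  simp only [funext (KNop_eq_integral a f)]
  exact (integrand.stronglyMeasurable.integral_prod_right' (ν := volume)).measurable

theorem exists_eLpNorm_KNop_unitCube_le (d : ℕ) (τ ρ : ℝ≥0∞) {r : ℝ≥0∞} [τ.HolderConjugate ρ]
    (hτ : τ ≤ 2) (hr : r ≤ ρ) :
    ∃ C ≠ ∞, ∀ (a : 𝓢(EuclideanSpace ℝ (Fin d ⊕ Fin d), ℂ))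
      (f : 𝓢(EuclideanSpace ℝ (Fin d), ℂ)) (n : Fin d → ℤ), ∀ x ∈ unitCube d,
      eLpNorm (fun t => KNop a f (t + intPoint n)) r (volume.restrict (unitCube d)) ≤
        C * eLpNorm (knMajorant a f (x + intPoint n)) τ volume := by
  obtain ⟨C, hC, hausdorff_young⟩ := exists_eLpNorm_fourier_le (EuclideanSpace ℝ (Fin d)) ℂ τ ρ hτ
  obtain ⟨K, hK, le_window⟩ := exists_enorm_le_mul_enorm_knWindow_mul d
  refine ⟨K * C, ENNReal.mul_ne_top hK hC, fun a f n x hx => ?_⟩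
  set g := knSpectrum a f (x + intPoint n)
  have integrable_g : Integrable g := integrable_knSpectrum a f _
  have continuous_inv : Continuous (𝓕⁻ g) := by
    simp only [funext (Real.fourierInv_eq_fourier_neg g)]
    exact (continuous_fourier integrable_g).comp continuous_neg
  have pointwise : ∀ᵐ t ∂volume.restrict (unitCube d),
      ‖KNop a f (t + intPoint n)‖ₑ ≤ K * ‖𝓕⁻ g (t + intPoint n)‖ₑ := by
    filter_upwards [ae_restrict_mem measurableSet_unitCube] with t ht
    rw [← knWindow_mul_KNop_eq_fourierInv, add_sub_add_right_eq_sub]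
    exact le_window t ht x hx _
  calc eLpNorm (fun t => KNop a f (t + intPoint n)) r (volume.restrict (unitCube d))
    _ ≤ eLpNorm (fun t => KNop a f (t + intPoint n)) ρ (volume.restrict (unitCube d)) :=
        eLpNorm_le_eLpNorm_of_exponent_le hr
          ((measurable_KNop a f).comp (measurable_add_const _)).aestronglyMeasurable
    _ ≤ eLpNorm (fun t => K * ‖𝓕⁻ g (t + intPoint n)‖ₑ) ρ (volume.restrict (unitCube d)) :=
        eLpNorm_mono_enorm_ae pointwise
    _ ≤ eLpNorm (fun t => K * ‖𝓕⁻ g (t + intPoint n)‖ₑ) ρ volume :=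
        eLpNorm_mono_measure _ Measure.restrict_le_self
    _ = K * eLpNorm (𝓕⁻ g) ρ volume := by
        rw [eLpNorm_translate (f := fun t => K * ‖𝓕⁻ g t‖ₑ) (by fun_prop),
          eLpNorm_ennreal_const_mul (by fun_prop), eLpNorm_enorm]
    _ ≤ K * (C * eLpNorm g τ volume) := by
        rw [eLpNorm_fourierInv integrable_g]
        exact mul_le_mul_right (hausdorff_young g integrable_g) K
    _ ≤ K * C * eLpNorm (knMajorant a f (x + intPoint n)) τ volume := by
        rw [mul_assoc]
        gcongr
        exact eLpNorm_mono_enorm (enorm_knSpectrum_le_knMajorant a f _)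

theorem exists_wNorm_KNop_le (d : ℕ) (τ ρ : ℝ≥0∞) {r e s : ℝ≥0∞} [τ.HolderConjugate ρ]
    (hτ : τ ≤ 2) (hr₀ : r ≠ 0) (hr : r ≤ ρ) (he : 1 ≤ e) (hes : e ≤ s) :
    ∃ C ≠ ∞, ∀ (a : 𝓢(EuclideanSpace ℝ (Fin d ⊕ Fin d), ℂ))
      (f : 𝓢(EuclideanSpace ℝ (Fin d), ℂ)), wNorm d r s (KNop a f) ≤
        C * eLpNorm (fun x => eLpNorm (knMajorant a f x) τ volume) e volume := by
  obtain ⟨C, hC, local_le⟩ := exists_eLpNorm_KNop_unitCube_le d τ ρ hτ hr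
  refine ⟨C, hC, fun a f => ?_⟩
  have measurable_norm : Measurable fun x => eLpNorm (knMajorant a f x) τ volume :=
    measurable_eLpNorm_prodMk (f := fun z => knMajorant a f z.1 z.2) (measurable_knMajorant a f)
  have cube_average (n : Fin d → ℤ) :
      eLpNorm (fun t => KNop a f (t + intPoint n)) r (volume.restrict (unitCube d)) ≤
        C * ∫⁻ x in unitCube d, eLpNorm (knMajorant a f (x + intPoint n)) τ volume := by
    rw [← lintegral_const_mul' _ _ hC]
    exact le_trans (by simp) (setLIntegral_mono' measurableSet_unitCube (local_le a f n))
  rw [wNorm_eq_eLpNorm hr₀ (one_pos.trans_le (he.trans hes)).ne']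
  calc _ ≤ eLpNorm (fun n : Fin d → ℤ => C * ∫⁻ x in unitCube d,
          eLpNorm (knMajorant a f (x + intPoint n)) τ volume) s Measure.count :=
        eLpNorm_ennreal_mono cube_average
    _ = C * eLpNorm (fun n : Fin d → ℤ => ∫⁻ x in unitCube d,
          eLpNorm (knMajorant a f (x + intPoint n)) τ volume) s Measure.count :=
        eLpNorm_ennreal_const_mul (measurable_of_countable _).aemeasurable C
    _ ≤ _ := mul_le_mul_right (eLpNorm_count_setLIntegral_unitCube_le he hes measurable_norm) C

theorem egaussian_le_mul_egaussian {E : Type*} [NormedAddCommGroup E] {b D : ℝ} (hb : 0 ≤ b)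
    {u v : E} (h : ‖u - v‖ ^ 2 ≤ D) :
    egaussian b u ≤ ENNReal.ofReal (Real.exp (b * D)) * egaussian (b / 2) v := by
  unfold egaussian
  rw [← ENNReal.ofReal_mul (Real.exp_pos _).le, ← Real.exp_add]
  refine ENNReal.ofReal_le_ofReal (Real.exp_le_exp.2 ?_)
  have triangle : ‖v‖ ≤ ‖u‖ + ‖u - v‖ := by simpa using norm_sub_le u (u - v)
  have : ‖v‖ ^ 2 ≤ 2 * ‖u‖ ^ 2 + 2 * D := by
    nlinarith [sq_nonneg (‖u‖ - ‖u - v‖), norm_nonneg v]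
  nlinarith

theorem tsum_egaussian_intPoint_ne_top {b : ℝ} (hb : 0 < b) :
    ∑' n : Fin d → ℤ, egaussian b (intPoint n) ≠ ∞ := by
  have le_integral (n : Fin d → ℤ) : egaussian b (intPoint n) ≤ ENNReal.ofReal (Real.exp (b * d)) *
      ∫⁻ x in unitCube d, egaussian (b / 2) (x + intPoint n) := by
    rw [← lintegral_const_mul' _ _ ofReal_ne_top]
    calc egaussian b (intPoint n) = ∫⁻ _ in unitCube d, egaussian b (intPoint n) := by simp
      _ ≤ _ := setLIntegral_mono' measurableSet_unitCube fun x hx =>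
          egaussian_le_mul_egaussian hb.le (by
            simpa using norm_sub_sq_le_of_mem_unitCube hx (fun _ => by simp : (0 : 𝔼) ∈ unitCube d))
  refine ne_top_of_le_ne_top ?_ (ENNReal.tsum_le_tsum le_integral)
  rw [ENNReal.tsum_mul_left, ← lintegral_eq_tsum_setLIntegral_unitCube]
  exact ENNReal.mul_ne_top ofReal_ne_top (lintegral_egaussian_ne_top (by positivity))

theorem eLpNorm_le_tsum_eLpNorm_unitCube {p : ℝ≥0∞} (hp : 1 ≤ p) (hp_top : p ≠ ∞)
    (g : 𝔼 → ℝ≥0∞) :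
    eLpNorm g p volume ≤ ∑' n : Fin d → ℤ,
      eLpNorm (fun x => g (x + intPoint n)) p (volume.restrict (unitCube d)) := by
  rw [eLpNorm_eq_eLpNorm_count_unitCube (one_pos.trans_le hp).ne' hp_top, ← lintegral_count,
    ← eLpNorm_one_ennreal_eq_lintegral]
  exact eLpNorm_count_le_of_le one_ne_zero hp _

theorem eLpNorm_mul_gaussWin_sub_le {θ r : ℝ≥0∞} (hθ : 1 ≤ θ) (hθ_top : θ ≠ ∞) (hr : θ ≤ r)
    {f : 𝔼 → ℂ} (hf : Measurable f) (y : 𝔼) :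
    eLpNorm (fun t => f t * gaussWin (t - y)) θ volume ≤
      ENNReal.ofReal (Real.exp (Real.pi * d)) * ∫⁻ k : Fin d → ℤ,
        eLpNorm (fun x => f (x + intPoint (k + floorPoint y))) r (volume.restrict (unitCube d)) *
          egaussian (Real.pi / 2) (intPoint k) ∂Measure.count := by
  set K := ENNReal.ofReal (Real.exp (Real.pi * d))
  have window_le (n : Fin d → ℤ) {x : 𝔼} (hx : x ∈ unitCube d) :
      ‖f (x + intPoint n) * gaussWin (x + intPoint n - y)‖ₑ ≤
        K * egaussian (Real.pi / 2) (intPoint (n - floorPoint y)) * ‖f (x + intPoint n)‖ₑ := by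
    rw [enorm_mul, enorm_gaussWin, mul_comm]
    refine mul_le_mul_left (egaussian_le_mul_egaussian Real.pi_pos.le ?_) _
    have shift : x + intPoint n - y - intPoint (n - floorPoint y) =
        x - (y - intPoint (floorPoint y)) := by rw [intPoint_sub]; abel
    rw [shift]
    exact norm_sub_sq_le_of_mem_unitCube hx (sub_intPoint_floorPoint_mem_unitCube y)
  rw [← eLpNorm_enorm, lintegral_count, ← ENNReal.tsum_mul_left,
    ← (Equiv.subRight (floorPoint y)).tsum_eq]
  refine (eLpNorm_le_tsum_eLpNorm_unitCube hθ hθ_top _).trans (ENNReal.tsum_le_tsum fun n => ?_)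
  rw [Equiv.subRight_apply, sub_add_cancel]
  calc _ ≤ eLpNorm (fun x => K * egaussian (Real.pi / 2) (intPoint (n - floorPoint y)) *
          ‖f (x + intPoint n)‖ₑ) θ (volume.restrict (unitCube d)) := by
        refine eLpNorm_mono_enorm_ae ?_
        filter_upwards [ae_restrict_mem measurableSet_unitCube] with x hx
        simpa using window_le n hx
    _ = K * egaussian (Real.pi / 2) (intPoint (n - floorPoint y)) *
          eLpNorm (fun x => f (x + intPoint n)) θ (volume.restrict (unitCube d)) := by
        rw [eLpNorm_ennreal_const_mul (by fun_prop), eLpNorm_enorm]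
    _ ≤ _ := by
        rw [mul_assoc, mul_comm (egaussian _ _)]
        gcongr
        exact eLpNorm_le_eLpNorm_of_exponent_le hr (Measurable.aestronglyMeasurable (by fun_prop))

theorem eLpNorm_comp_floorPoint (A : (Fin d → ℤ) → ℝ≥0∞) (α : ℝ≥0∞) :
    eLpNorm (fun y : 𝔼 => A (floorPoint y)) α volume = eLpNorm A α Measure.count :=
  eLpNorm_comp_measurePreserving (measurable_of_countable A).aestronglyMeasurable
    measurePreserving_floorPoint

theorem eLpNorm_count_lintegral_translate_mul_le {s : ℝ≥0∞} (hs : 1 ≤ s)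
    (D w : (Fin d → ℤ) → ℝ≥0∞) :
    eLpNorm (fun m => ∫⁻ k, D (k + m) * w k ∂Measure.count) s Measure.count ≤
      eLpNorm D s Measure.count * ∑' k, w k := by
  rw [← lintegral_count, ← eLpNorm_one_ennreal_eq_lintegral]
  exact eLpNorm_lintegral_translate_mul_le hs le_rfl (by rw [inv_one, add_comm])
    (measurable_of_countable D) (measurable_of_countable w)

theorem exists_eLpNorm_STFT_apply_le (d : ℕ) (θ σ : ℝ≥0∞) {r : ℝ≥0∞} [θ.HolderConjugate σ]
    (hθ : θ ≤ 2) (hr : θ ≤ r) :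
    ∃ C ≠ ∞, ∀ (f : 𝓢(EuclideanSpace ℝ (Fin d), ℂ)) (y : EuclideanSpace ℝ (Fin d)),
      eLpNorm (STFT f y) σ volume ≤ C * ∫⁻ k : Fin d → ℤ,
        eLpNorm (fun x => f (x + intPoint (k + floorPoint y))) r (volume.restrict (unitCube d)) *
          egaussian (Real.pi / 2) (intPoint k) ∂Measure.count := by
  obtain ⟨C, hC, hausdorff_young⟩ := exists_eLpNorm_fourier_le (EuclideanSpace ℝ (Fin d)) ℂ θ σ hθ
  refine ⟨C * ENNReal.ofReal (Real.exp (Real.pi * d)), ENNReal.mul_ne_top hC ofReal_ne_top,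
    fun f y => ?_⟩
  rw [STFT_eq_fourier, mul_assoc]
  exact (hausdorff_young _ (integrable_mul_gaussWin_sub f y)).trans
    (mul_le_mul_right (eLpNorm_mul_gaussWin_sub_le (HolderConjugate.one_le θ σ)
      (ne_top_of_le_ne_top ofNat_ne_top hθ) hr f.continuous.measurable y) C)

theorem exists_eLpNorm_STFT_le (d : ℕ) (θ σ : ℝ≥0∞) {r s α : ℝ≥0∞} [θ.HolderConjugate σ]
    (hθ : θ ≤ 2) (hr : θ ≤ r) (hs : 1 ≤ s) (hα : s ≤ α) :
    ∃ C ≠ ∞, ∀ f : 𝓢(EuclideanSpace ℝ (Fin d), ℂ),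
      eLpNorm (fun y => eLpNorm (STFT f y) σ volume) α volume ≤ C * wNorm d r s f := by
  obtain ⟨C, hC, STFT_le⟩ := exists_eLpNorm_STFT_apply_le d θ σ hθ hr
  have hs₀ : s ≠ 0 := (one_pos.trans_le hs).ne'
  have hr₀ : r ≠ 0 := ((one_pos.trans_le (HolderConjugate.one_le θ σ)).trans_le hr).ne'
  let w : (Fin d → ℤ) → ℝ≥0∞ := fun k => egaussian (Real.pi / 2) (intPoint k)
  refine ⟨C * ∑' k, w k, ENNReal.mul_ne_top hC (tsum_egaussian_intPoint_ne_top (by positivity)),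
    fun f => ?_⟩
  let D : (Fin d → ℤ) → ℝ≥0∞ := fun n =>
    eLpNorm (fun x => f (x + intPoint n)) r (volume.restrict (unitCube d))
  let A : (Fin d → ℤ) → ℝ≥0∞ := fun m => ∫⁻ k, D (k + m) * w k ∂Measure.count
  calc eLpNorm (fun y => eLpNorm (STFT f y) σ volume) α volume
    _ ≤ eLpNorm (fun y => C * A (floorPoint y)) α volume := eLpNorm_ennreal_mono (STFT_le f)
    _ = eLpNorm (fun m => C * A m) α Measure.count := eLpNorm_comp_floorPoint (fun m => C * A m) α
    _ ≤ eLpNorm (fun m => C * A m) s Measure.count := eLpNorm_count_le_of_le hs₀ hα _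
    _ = C * eLpNorm A s Measure.count :=
        eLpNorm_ennreal_const_mul (measurable_of_countable A).aemeasurable C
    _ ≤ C * (eLpNorm D s Measure.count * ∑' k, w k) :=
        mul_le_mul_right (eLpNorm_count_lintegral_translate_mul_le hs D w) C
    _ = C * (∑' k, w k) * wNorm d r s f := by
        rw [wNorm_eq_eLpNorm hr₀ hs₀, mul_comm (eLpNorm D s _), mul_assoc]

end Localization

section Exponents

/-- The Lebesgue exponent with reciprocal `t`, so that linear relations between reciprocals of
exponents become relations between real numbers; it is `∞` for all `t ≤ 0`. -/
noncomputable def expOfInv (t : ℝ) : ℝ≥0∞ := (ENNReal.ofReal t)⁻¹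

variable {t u : ℝ} {p : ℝ≥0∞}

theorem one_le_expOfInv (ht : t ≤ 1) : 1 ≤ expOfInv t :=
  ENNReal.one_le_inv.2 (ofReal_le_one.2 ht)

theorem expOfInv_ne_zero (t : ℝ) : expOfInv t ≠ 0 := ENNReal.inv_ne_zero.2 ofReal_ne_top

theorem expOfInv_ne_top (ht : 0 < t) : expOfInv t ≠ ∞ :=
  ENNReal.inv_ne_top.2 (ENNReal.ofReal_pos.2 ht).ne'

theorem expOfInv_anti (h : t ≤ u) : expOfInv u ≤ expOfInv t :=
  ENNReal.inv_le_inv.2 (ofReal_le_ofReal h)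

theorem expOfInv_le_two (ht : 1 / 2 ≤ t) : expOfInv t ≤ 2 :=
  (expOfInv_anti ht).trans_eq (by simp [expOfInv, ENNReal.ofReal_inv_of_pos])

theorem inv_expOfInv_add_inv_expOfInv (ht : 0 ≤ t) (hu : 0 ≤ u) :
    (expOfInv t)⁻¹ + (expOfInv u)⁻¹ = ENNReal.ofReal (t + u) := by
  rw [expOfInv, expOfInv, inv_inv, inv_inv, ofReal_add ht hu]

theorem holderConjugate_expOfInv (ht : 0 ≤ t) (hu : 0 ≤ u) (h : t + u = 1) :
    (expOfInv t).HolderConjugate (expOfInv u) :=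
  ⟨by rw [inv_expOfInv_add_inv_expOfInv ht hu, h, ENNReal.ofReal_one, inv_one]⟩

theorem expOfInv_invR (hp : 1 ≤ p) : expOfInv (invR p) = p := by
  rw [expOfInv, invR, ofReal_toReal (ENNReal.inv_ne_top.2 (one_pos.trans_le hp).ne'), inv_inv]

theorem invR_anti {q : ℝ≥0∞} (hq : 1 ≤ q) (h : q ≤ p) : invR p ≤ invR q :=
  toReal_mono (ENNReal.inv_ne_top.2 (one_pos.trans_le hq).ne') (ENNReal.inv_le_inv.2 h)

theorem invR_le_one (hp : 1 ≤ p) : invR p ≤ 1 :=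
  (invR_anti le_rfl hp).trans_eq (by simp [invR])

theorem invR_dualExp (hp : 1 ≤ p) : invR (dualExp p) = 1 - invR p := by
  rcases eq_or_ne p ∞ with rfl | hp_top
  · simp [dualExp, invR]
  rcases hp.eq_or_lt with rfl | hp_one
  · simp [dualExp, invR]
  have one_lt : 1 < p.toReal := by simpa using toReal_strict_mono hp_top hp_one
  have sub_ne : p.toReal - 1 ≠ 0 := (sub_pos.2 one_lt).ne'
  rw [dualExp, if_neg hp_one.ne', if_neg hp_top, invR, invR, toReal_inv, toReal_inv,
    toReal_ofReal (div_nonneg (by linarith) (by linarith))]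
  field_simp

theorem abs_invR_sub_half_le {q : ℝ≥0∞} (hq : 1 ≤ q) (hp : 1 ≤ p) (h : q ≤ min p (dualExp p)) :
    |invR p - 1 / 2| ≤ invR q - 1 / 2 := by
  have le_inv := invR_anti hq (h.trans (min_le_left _ _))
  have le_inv_dual := invR_anti hq (h.trans (min_le_right _ _))
  rw [invR_dualExp hp] at le_inv_dual
  exact abs_le.2 ⟨by linarith, by linarith⟩

end Exponents

section Boundedness

variable {d : ℕ}

theorem eLpNorm_knMajorant_le {A B P Q T U : ℝ} (hA : 0 ≤ A) (hB : 0 ≤ B) (hP : 0 ≤ P)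
    (hT : 0 ≤ T) (hU : 0 ≤ U) (hP_lt : P < 1) (hQ : Q ≤ 1) (hT_lt : T < 1)
    (hAP : A ≤ 1 - P) (hBP : B ≤ 1 - P) (hTP : T ≤ 1 - P) (hUP : U ≤ 1 - P)
    (hAB : (1 - P) + (1 - Q) = A + B) (hUT : (1 - P) + (1 - Q) = U + T)
    (a : 𝓢(EuclideanSpace ℝ (Fin d ⊕ Fin d), ℂ)) (f : 𝓢(EuclideanSpace ℝ (Fin d), ℂ)) :
    eLpNorm (fun x => eLpNorm (knMajorant a f x) (expOfInv (1 - T)) volume)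
        (expOfInv (1 - B)) volume ≤
      modNorm (expOfInv P) (expOfInv Q) a *
        eLpNorm (fun y => eLpNorm (STFT f y) (expOfInv U) volume) (expOfInv A) volume := by
  have conj_e := holderConjugate_expOfInv (t := 1 - B) (u := B) (by linarith) hB (by ring)
  have conj_τ := holderConjugate_expOfInv (t := 1 - T) (u := T) (by linarith) hT (by ring)
  have conj_p := holderConjugate_expOfInv (t := P) (u := 1 - P) hP (by linarith) (by ring)
  have conj_q := holderConjugate_expOfInv (t := Q) (u := 1 - Q) (by linarith) (by linarith)
    (by ring)
  have young_outer : (expOfInv (1 - P))⁻¹ + (expOfInv (1 - Q))⁻¹ =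
      (expOfInv A)⁻¹ + (expOfInv B)⁻¹ := by
    rw [inv_expOfInv_add_inv_expOfInv (by linarith) (by linarith),
      inv_expOfInv_add_inv_expOfInv hA hB, hAB]
  have young_inner : (expOfInv (1 - P))⁻¹ + (expOfInv (1 - Q))⁻¹ =
      (expOfInv U)⁻¹ + (expOfInv T)⁻¹ := by
    rw [inv_expOfInv_add_inv_expOfInv (by linarith) (by linarith),
      inv_expOfInv_add_inv_expOfInv hU hT, hUT]
  rw [modNorm_eq_eLpNorm_pairE (expOfInv_ne_zero P) (expOfInv_ne_zero Q)]
  have twisted := eLpNorm_eLpNorm_twisted_le (μ := (volume : Measure (EuclideanSpace ℝ (Fin d))))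
    (e := expOfInv (1 - B)) (τ := expOfInv (1 - T)) (p := expOfInv P) (q := expOfInv Q)
    (V := fun u => ‖STFT a (pairE u.1.1 u.1.2) (pairE u.2.1 u.2.2)‖ₑ)
    (F := fun z => ‖STFT f z.1 z.2‖ₑ)
    (expOfInv_ne_top (sub_pos.2 hT_lt)) (expOfInv_ne_top (sub_pos.2 hP_lt)) (expOfInv_anti hAP)
    (expOfInv_anti hBP) (expOfInv_anti hUP) (expOfInv_anti hTP) young_outer young_inner
    (by fun_prop) (by fun_prop)
  simp only [eLpNorm_enorm, ← Measure.volume_eq_prod] at twisted ⊢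
  exact twisted

theorem exists_wNorm_KNop_le_modNorm_mul_wNorm (d : ℕ) {Q R S : ℝ} (hQ : Q ≤ 1)
    (hR : |R - 1 / 2| ≤ Q - 1 / 2) (hS : |S - 1 / 2| ≤ Q - 1 / 2) :
    ∃ C ≠ ∞, ∀ (a : 𝓢(EuclideanSpace ℝ (Fin d ⊕ Fin d), ℂ)) (f : 𝓢(EuclideanSpace ℝ (Fin d), ℂ)),
      wNorm d (expOfInv R) (expOfInv S) (KNop a f) ≤
        C * modNorm (expOfInv (|R - 1 / 2| + (1 - Q))) (expOfInv Q) a *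
          wNorm d (expOfInv R) (expOfInv S) f := by
  set δ := |R - 1 / 2|
  obtain ⟨hS_lower, hS_upper⟩ := abs_le.1 hS
  obtain ⟨T, hT_nonneg, hT_le_half, hT_le, U, hU_nonneg, hU_le_half, hU_le, hUT⟩ :
      ∃ T : ℝ, 0 ≤ T ∧ T ≤ 1 / 2 ∧ T ≤ R ∧ ∃ U : ℝ, 0 ≤ U ∧ U ≤ 1 / 2 ∧ U ≤ 1 - R ∧
        U + T = 1 - δ := by
    obtain ⟨hR_lower, hR_upper⟩ := abs_le.1 hR
    exact ⟨min R (1 / 2), by grind, by grind, by grind, min (1 - R) (1 / 2), by grind⟩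
  obtain ⟨A, hA_lower, hA_lower', hA_le, hA_upper⟩ :
      ∃ A, 1 - Q ≤ A ∧ S - δ ≤ A ∧ A ≤ S ∧ A ≤ Q - δ :=
    ⟨max (1 - Q) (S - δ), by grind⟩
  have conj_out := holderConjugate_expOfInv (t := 1 - T) (u := T) (by linarith) hT_nonneg (by ring)
  have conj_in := holderConjugate_expOfInv (t := 1 - U) (u := U) (by linarith) hU_nonneg (by ring)
  obtain ⟨C_out, hC_out, KNop_le⟩ := exists_wNorm_KNop_le d (expOfInv (1 - T)) (expOfInv T)
    (r := expOfInv R) (e := expOfInv (1 - (1 - δ - A))) (s := expOfInv S)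
    (expOfInv_le_two (by linarith)) (expOfInv_ne_zero R) (expOfInv_anti hT_le)
    (one_le_expOfInv (by linarith)) (expOfInv_anti (by linarith))
  obtain ⟨C_in, hC_in, STFT_le⟩ := exists_eLpNorm_STFT_le d (expOfInv (1 - U)) (expOfInv U)
    (r := expOfInv R) (s := expOfInv S) (α := expOfInv A)
    (expOfInv_le_two (by linarith)) (expOfInv_anti (by linarith))
    (one_le_expOfInv (by linarith)) (expOfInv_anti hA_le)
  refine ⟨C_out * C_in, ENNReal.mul_ne_top hC_out hC_in, fun a f => ?_⟩
  have majorant_le := eLpNorm_knMajorant_le (A := A) (B := 1 - δ - A) (P := δ + (1 - Q)) (Q := Q)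
    (T := T) (U := U) (by linarith) (by linarith) (by linarith) hT_nonneg hU_nonneg (by linarith)
    hQ (by linarith) (by linarith) (by linarith) (by linarith) (by linarith) (by ring)
    (by linarith) a f
  refine (KNop_le a f).trans ((mul_le_mul_right (majorant_le.trans
    (mul_le_mul_right (STFT_le f) _)) C_out).trans_eq ?_)
  ring

end Boundedness

/-- if `1/p ≥ |1/r − 1/2| + 1/q'` and `q ≤ min{r,r',s,s'}`, then
symbols in `M^{p,q}` give operators bounded on `W(L^r,L^s)`. -/
theorem kn_Mpq_bounded_on_amalgam (d : ℕ) (p q r s : ℝ≥0∞)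
    (hp : 1 ≤ p) (hq : 1 ≤ q) (hr : 1 ≤ r) (hs : 1 ≤ s)
    (h1 : |invR r - 1 / 2| + invR (dualExp q) ≤ invR p)
    (h2 : q ≤ min (min r (dualExp r)) (min s (dualExp s))) :
    ∃ C : ℝ, 0 < C ∧
      ∀ (a : SchwartzMap (EuclideanSpace ℝ (Fin d ⊕ Fin d)) ℂ)
        (f : SchwartzMap (EuclideanSpace ℝ (Fin d)) ℂ),
        wNorm d r s (KNop ⇑a ⇑f) ≤
          ENNReal.ofReal C * modNorm p q ⇑a * wNorm d r s ⇑f := by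
  rw [invR_dualExp hq] at h1
  rw [le_min_iff] at h2
  obtain ⟨C, hC, KNop_le⟩ := exists_wNorm_KNop_le_modNorm_mul_wNorm d (invR_le_one hq)
    (abs_invR_sub_half_le hq hr h2.1) (abs_invR_sub_half_le hq hs h2.2)
  rw [expOfInv_invR hq, expOfInv_invR hr, expOfInv_invR hs] at KNop_le
  obtain ⟨K, hK, modNorm_le⟩ := exists_modNorm_le_of_le (Fin d ⊕ Fin d) hp
    ((expOfInv_invR hp).ge.trans (expOfInv_anti h1)) hq
  have hCK : C * K + 1 ≠ ∞ := add_ne_top.2 ⟨ENNReal.mul_ne_top hC hK, one_ne_top⟩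
  refine ⟨(C * K + 1).toReal, toReal_pos (by simp) hCK, fun a f => ?_⟩
  rw [ofReal_toReal hCK]
  calc wNorm d r s (KNop a f)
    _ ≤ C * modNorm _ q a * wNorm d r s f := KNop_le a f
    _ ≤ C * (K * modNorm p q a) * wNorm d r s f := by gcongr; exact modNorm_le a
    _ = C * K * modNorm p q a * wNorm d r s f := by ring
    _ ≤ (C * K + 1) * modNorm p q a * wNorm d r s f := by gcongr; exact le_self_add
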